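/- Let p be a prime, e ≥ 1, q = p^e, and let Ω = AlgebraicClosure (ZMod p). Let f_1, …, f_r ∈ MvPolynomial (Fin n) Ω be polynomials all of whose coefficients c satisfy c^q = c (i.e., all coefficients lie in the subfield of Ω with q elements). For m ≥ 1 set N_m = Nat.card {x : Fin n → Ω | (∀ j, f_j evaluated at x is 0) ∧ (∀ i, (x i)^{q^m} = x i)}, the number of solutions with coordinates in the subfield with q^m elements. Then the formal power series Σ_{m≥1} N_m t^m ∈ ℚ[[t]] is rational. -/

import Mathlib

open PowerSeries

/-!
Let `ζ` be a primitive `p`-th root of unity over the Witt vectors of the algebraically closed field,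
and `l = 1 - ζ`. Orthogonality of the character `ζ ^ Tr` turns `q ^ (m r) N_m` into a sum of its
values at `∑ y_j f_j`. By Dwork's splitting, modulo `l ^ M` such a value is a product, over the
orbit of Frobenius, of values of one polynomial `H` at Teichmüller points. Hence modulo `l ^ M` the
sum is a combination, with coefficients powers of `q ^ m - 1`, of the traces of the `m`-th powers of
finitely many matrices built from `H`, whose entries decay `l`-adically at a rate independent of
`M`. Their generating series are therefore quotients of overconvergent series, which makes the
`k × k` Hankel determinants of the sequence `q ^ (m r) N_m` divisible by a power of `p` growing
quadratically in `k`, with an arbitrarily large constant. As they are integers at most exponential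
in `k ^ 2`, they vanish for large `k`: the sequence satisfies a linear recurrence.
-/

namespace DworkRationality

open Finset

section Hankel

/-- The `k × k` Hankel matrix `(a (i + j))` of a sequence `a`. -/
def hankel {R : Type*} (a : ℕ → R) (k : ℕ) : Matrix (Fin k) (Fin k) R :=
  Matrix.of fun i j => a (i + j)

theorem map_det_hankel {R S : Type*} [CommRing R] [CommRing S] (φ : R →+* S) (a : ℕ → R) (k : ℕ) :
    φ (hankel a k).det = (hankel (fun m => φ (a m)) k).det :=
  RingHom.map_det φ _

theorem det_hankel_pow_mul {R : Type*} [CommRing R] (x : R) (a : ℕ → R) (k : ℕ) :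
    (hankel (fun m => x ^ m * a m) k).det = (∏ i : Fin k, x ^ (i : ℕ)) ^ 2 * (hankel a k).det := by
  have hdiag : hankel (fun m => x ^ m * a m) k =
      Matrix.diagonal (fun i : Fin k => x ^ (i : ℕ)) * hankel a k *
        Matrix.diagonal fun i : Fin k => x ^ (i : ℕ) := by
    ext i j
    simp only [hankel, Matrix.of_apply, Matrix.mul_diagonal, Matrix.diagonal_mul]
    ring
  rw [hdiag, Matrix.det_mul, Matrix.det_mul, Matrix.det_diagonal]
  ring

variable {F : Type*} [Field F]

theorem det_hankel_eq_zero_iff (a : ℕ → F) (k : ℕ) :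
    (hankel a k).det = 0 ↔
      ∃ w : ℕ → F, (∃ i < k, w i ≠ 0) ∧ ∀ j < k, ∑ i ∈ range k, w i * a (i + j) = 0 := by
  rw [← Matrix.exists_vecMul_eq_zero_iff]
  constructor
  · rintro ⟨v, hv, hva⟩
    obtain ⟨i, hi⟩ := Function.ne_iff.mp hv
    refine ⟨fun i => if h : i < k then v ⟨i, h⟩ else 0, ⟨i, i.2, by simpa using hi⟩,
      fun j hj => ?_⟩
    rw [← Fin.sum_univ_eq_sum_range (fun i => (if h : i < k then v ⟨i, h⟩ else 0) * a (i + j))]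
    simpa [Matrix.vecMul, dotProduct, hankel] using congrFun hva ⟨j, hj⟩
  · rintro ⟨w, ⟨i, hi, hwi⟩, hw⟩
    refine ⟨fun i => w i, fun h => hwi (congrFun h ⟨i, hi⟩), funext fun j => ?_⟩
    simpa [Matrix.vecMul, dotProduct, hankel, Fin.sum_univ_eq_sum_range (fun i => w i * a (i + j))]
      using hw j j.2

theorem exists_recurrence_of_det_hankel_ne_zero {a : ℕ → F} {r : ℕ} (h : (hankel a r).det ≠ 0) :
    ∃ c : ℕ → F, c r = 1 ∧ ∀ i < r, ∑ l ∈ range (r + 1), c l * a (i + l) = 0 := by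
  let v : Fin r → F := (hankel a r)⁻¹.mulVec fun i => -a (i + r)
  have hv : (hankel a r).mulVec v = fun i : Fin r => -a (i + r) := by
    rw [Matrix.mulVec_mulVec, Matrix.mul_nonsing_inv _ (isUnit_iff_ne_zero.mpr h),
      Matrix.one_mulVec]
  refine ⟨fun l => if hl : l < r then v ⟨l, hl⟩ else 1, by simp, fun i hi => ?_⟩
  have hvi := congrFun hv ⟨i, hi⟩
  simp only [Matrix.mulVec, dotProduct, hankel, Matrix.of_apply] at hvi
  rw [sum_range_succ, ← Fin.sum_univ_eq_sum_range
    (fun l => (if hl : l < r then v ⟨l, hl⟩ else 1) * a (i + l))]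
  simp [mul_comm (v _), hvi]

theorem eq_zero_of_sum_mul_shift_eq_zero {b w : ℕ → F} {s d : ℕ} (hd : d ≤ s)
    (hb : ∀ i < s, b i = 0) (hbs : b s ≠ 0)
    (h : ∀ j ≤ d, ∑ i ∈ range (s + 1), w i * b (i + j) = 0) : ∀ j ≤ d, w (s - j) = 0 := by
  intro j
  induction j using Nat.strong_induction_on with
  | _ j ih =>
  intro hj
  have hsum := h j hj
  rw [sum_eq_single (s - j)] at hsum
  · rw [Nat.sub_add_cancel (hj.trans hd)] at hsum
    exact (mul_eq_zero.mp hsum).resolve_right hbs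
  · intro i hi hne
    rw [mem_range] at hi
    by_cases hij : i + j < s
    · rw [hb _ hij, mul_zero]
    · have := ih (s - i) (by omega) (by omega)
      rw [Nat.sub_sub_self (by omega)] at this
      rw [this, zero_mul]
  · intro hi
    simp at hi

theorem sum_mul_recurrence_eq_zero {a c w : ℕ → F} {r s : ℕ}
    (hw : ∀ j ≤ s, ∑ i ∈ range (s + 1), w i * a (i + j) = 0) {j : ℕ} (hj : j + r ≤ s) :
    ∑ i ∈ range (s + 1), w i * ∑ l ∈ range (r + 1), c l * a (i + j + l) = 0 := by
  simp only [mul_sum]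
  rw [sum_comm]
  refine sum_eq_zero fun l hl => ?_
  rw [mem_range] at hl
  calc ∑ i ∈ range (s + 1), w i * (c l * a (i + j + l))
      = c l * ∑ i ∈ range (s + 1), w i * a (i + (j + l)) := by
        rw [mul_sum]
        exact sum_congr rfl fun i _ => by rw [add_assoc]; ring
    _ = 0 := by rw [hw (j + l) (by omega), mul_zero]

/- At the first failure `s` of the recurrence, a kernel vector of the Hankel matrix of size `s + 1`
is supported on the first `r` coordinates, hence is a kernel vector of the invertible one of
size `r`. -/
theorem recurrence_of_det_hankel_eq_zero {a c : ℕ → F} {r : ℕ} (hr : (hankel a r).det ≠ 0)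
    (hgt : ∀ k, r < k → (hankel a k).det = 0)
    (hc : ∀ i < r, ∑ l ∈ range (r + 1), c l * a (i + l) = 0) (s : ℕ) :
    ∑ l ∈ range (r + 1), c l * a (s + l) = 0 := by
  induction s using Nat.strong_induction_on with
  | _ s ih =>
  by_cases hs : s < r
  · exact hc s hs
  by_contra hbs
  obtain ⟨w, ⟨i₀, hi₀, hwi₀⟩, hw⟩ := (det_hankel_eq_zero_iff a (s + 1)).mp (hgt _ (by omega))
  have hw_ge : ∀ i, r ≤ i → i ≤ s → w i = 0 := by
    intro i hi his
    have := eq_zero_of_sum_mul_shift_eq_zero (d := s - r) (Nat.sub_le s r) ih hbs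
      (fun j hj => sum_mul_recurrence_eq_zero (fun j hj => hw j (by omega)) (by omega))
      (s - i) (by omega)
    rwa [Nat.sub_sub_self his] at this
  refine hr ((det_hankel_eq_zero_iff a r).mpr ⟨w, ⟨i₀, ?_, hwi₀⟩, fun j hj => ?_⟩)
  · by_contra hi
    exact hwi₀ (hw_ge i₀ (by omega) (by omega))
  · rw [← hw j (by omega)]
    refine sum_subset (range_subset_range.mpr (by omega)) fun i hi hir => ?_
    rw [mem_range] at hi hir
    rw [hw_ge i (by omega) (by omega), zero_mul]

theorem exists_recurrence_of_eventually_det_hankel_eq_zero {a : ℕ → F} {k₀ : ℕ}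
    (h : ∀ k, k₀ ≤ k → (hankel a k).det = 0) :
    ∃ (r : ℕ) (c : ℕ → F), c r = 1 ∧ ∀ i, ∑ l ∈ range (r + 1), c l * a (i + l) = 0 := by
  classical
  let P : ℕ → Prop := fun k => (hankel a k).det ≠ 0
  have hP : P (Nat.findGreatest P k₀) :=
    Nat.findGreatest_spec (Nat.zero_le _) (show P 0 by simp [P])
  obtain ⟨c, hcr, hc⟩ := exists_recurrence_of_det_hankel_ne_zero hP
  refine ⟨_, c, hcr, recurrence_of_det_hankel_eq_zero hP (fun k hk => ?_) hc⟩
  rcases le_total k k₀ with hk₀ | hk₀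
  · exact not_not.mp (Nat.findGreatest_is_greatest hk hk₀)
  · exact h k hk₀

theorem exists_polynomial_mul_mk_eq_of_recurrence {R : Type*} [CommRing R]
    {a c : ℕ → R} {r : ℕ} (hc : c r ≠ 0) (h : ∀ i, ∑ l ∈ range (r + 1), c l * a (i + l) = 0) :
    ∃ A B : Polynomial R, B ≠ 0 ∧ (B : R⟦X⟧) * PowerSeries.mk a = A := by
  let B : Polynomial R := ∑ k ∈ range (r + 1), Polynomial.monomial k (c (r - k))
  have hB : ∀ k, B.coeff k = if k ≤ r then c (r - k) else 0 := by
    intro k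
    simp [B, Polynomial.finsetSum_coeff, Polynomial.coeff_monomial]
  refine ⟨trunc r ((B : R⟦X⟧) * PowerSeries.mk a), B, fun hB0 => hc ?_, ?_⟩
  · simpa [hB0, eq_comm] using hB 0
  · ext N
    rw [Polynomial.coeff_coe, coeff_trunc]
    split_ifs with hN
    · rfl
    rw [coeff_mul, Nat.sum_antidiagonal_eq_sum_range_succ_mk]
    simp only [Polynomial.coeff_coe, coeff_mk, hB]
    rw [← sum_subset (s₁ := range (r + 1)) (range_subset_range.mpr (by omega))
      fun k _ hk => by rw [if_neg (by simpa using hk), zero_mul],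
      ← h (N - r), ← sum_range_reflect]
    refine sum_congr rfl fun l hl => ?_
    rw [mem_range] at hl
    rw [if_pos (by omega)]
    congr 2 <;> omega

end Hankel

section Overconvergent

variable {R : Type*} [CommRing R]

/-- The power series whose `j`-th coefficient is divisible by `l ^ (C * (j - K))`: an algebraic form
of convergence in a disc of radius `|l| ^ (-C)`, with uniform control at the boundary. The
subtraction is truncated. -/
def overconvergent (l : R) (C K : ℕ) : Submodule R R⟦X⟧ where
  carrier := {f | ∀ j, l ^ (C * (j - K)) ∣ coeff j f}
  add_mem' hf hg j := by
    rw [map_add]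
    exact dvd_add (hf j) (hg j)
  zero_mem' j := by simp
  smul_mem' c f hf j := by
    rw [coeff_smul]
    exact (hf j).mul_left c

variable {l : R} {C K K' : ℕ}

theorem overconvergent_mono (h : K ≤ K') : overconvergent l C K ≤ overconvergent l C K' :=
  fun _ hf j => (pow_dvd_pow l (Nat.mul_le_mul_left C (by omega))).trans (hf j)

theorem mul_mem_overconvergent {f g : R⟦X⟧} (hf : f ∈ overconvergent l C K)
    (hg : g ∈ overconvergent l C K') : f * g ∈ overconvergent l C (K + K') := by
  intro j
  rw [coeff_mul]
  refine dvd_sum fun x hx => ?_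
  rw [HasAntidiagonal.mem_antidiagonal] at hx
  refine (pow_dvd_pow l ?_).trans ((pow_add l _ _).symm ▸ mul_dvd_mul (hf x.1) (hg x.2))
  rw [← mul_add]
  exact Nat.mul_le_mul_left C (by omega)

theorem one_mem_overconvergent : (1 : R⟦X⟧) ∈ overconvergent l C K := by
  intro j
  rw [coeff_one]
  split_ifs with h
  · simp [h]
  · simp

theorem one_apply_mem_overconvergent {ι : Type*} [DecidableEq ι] (i j : ι) :
    (1 : Matrix ι ι R⟦X⟧) i j ∈ overconvergent l C K := by
  rw [Matrix.one_apply]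
  split_ifs
  · exact one_mem_overconvergent
  · exact Submodule.zero_mem _

theorem X_mul_C_mem_overconvergent {a : R} (h : l ^ (C * (1 - K)) ∣ a) :
    (X * PowerSeries.C a : R⟦X⟧) ∈ overconvergent l C K := by
  intro j
  rw [mul_comm X, coeff_C_mul, coeff_X]
  split_ifs with hj
  · rwa [hj, mul_one]
  · simp

theorem prod_mem_overconvergent {ι : Type*} {s : Finset ι} {K : ι → ℕ} {f : ι → R⟦X⟧}
    (h : ∀ i ∈ s, f i ∈ overconvergent l C (K i)) :
    ∏ i ∈ s, f i ∈ overconvergent l C (∑ i ∈ s, K i) := by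
  classical
  induction s using Finset.induction_on with
  | empty => simpa using one_mem_overconvergent
  | insert a s ha ih =>
    rw [prod_insert ha, sum_insert ha]
    exact mul_mem_overconvergent (h a (mem_insert_self a s))
      (ih fun i hi => h i (mem_insert_of_mem hi))

theorem det_mem_overconvergent {ι : Type*} [Fintype ι] [DecidableEq ι] {K : ι → ℕ}
    {A : Matrix ι ι R⟦X⟧} (h : ∀ i j, A i j ∈ overconvergent l C (K i)) :
    A.det ∈ overconvergent l C (∑ i, K i) := by
  rw [← Matrix.det_transpose, Matrix.det_apply']
  refine Submodule.sum_mem _ fun σ _ => ?_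
  rw [← zsmul_eq_mul]
  exact zsmul_mem (prod_mem_overconvergent fun i _ => h i _) _

/-- A quotient of two series in `overconvergent l C K`, the denominator having constant coefficient
`1`: an algebraic form of meromorphy in a disc of radius `|l| ^ (-C)`. -/
def IsOverconvergentQuotient (l : R) (C K : ℕ) (P : R⟦X⟧) : Prop :=
  ∃ W ∈ overconvergent l C K, constantCoeff W = 1 ∧ W * P ∈ overconvergent l C K

namespace IsOverconvergentQuotient

variable {P Q : R⟦X⟧}

theorem zero : IsOverconvergentQuotient l C 0 0 :=
  ⟨1, one_mem_overconvergent, map_one _, by simp⟩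

theorem add (hP : IsOverconvergentQuotient l C K P) (hQ : IsOverconvergentQuotient l C K' Q) :
    IsOverconvergentQuotient l C (K + K') (P + Q) := by
  obtain ⟨W, hW, hW1, hWP⟩ := hP
  obtain ⟨V, hV, hV1, hVQ⟩ := hQ
  refine ⟨W * V, mul_mem_overconvergent hW hV, by rw [map_mul, hW1, hV1, one_mul], ?_⟩
  rw [show W * V * (P + Q) = W * P * V + W * (V * Q) by ring]
  exact Submodule.add_mem _ (mul_mem_overconvergent hWP hV) (mul_mem_overconvergent hW hVQ)

theorem smul (c : R) (hP : IsOverconvergentQuotient l C K P) :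
    IsOverconvergentQuotient l C K (c • P) := by
  obtain ⟨W, hW, hW1, hWP⟩ := hP
  exact ⟨W, hW, hW1, by rw [mul_smul_comm]; exact Submodule.smul_mem _ c hWP⟩

theorem sum {ι : Type*} {s : Finset ι} {K : ι → ℕ} {P : ι → R⟦X⟧}
    (h : ∀ i ∈ s, IsOverconvergentQuotient l C (K i) (P i)) :
    IsOverconvergentQuotient l C (∑ i ∈ s, K i) (∑ i ∈ s, P i) := by
  classical
  induction s using Finset.induction_on with
  | empty => simpa using zero
  | insert a s ha ih =>
    rw [sum_insert ha, sum_insert ha]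
    exact (h a (mem_insert_self a s)).add (ih fun i hi => h i (mem_insert_of_mem hi))

end IsOverconvergentQuotient

theorem pow_dvd_sum_coeff_mul_coeff {W P : R⟦X⟧} (hW : W ∈ overconvergent l C K)
    (hWP : W * P ∈ overconvergent l C K) (i j : ℕ) :
    l ^ (C * (j - K)) ∣ ∑ x ∈ range (j + 1), coeff x W * coeff (i + j - x) P := by
  have hsplit : coeff (i + j) (W * P) =
      ∑ x ∈ range (i + j + 1), coeff x W * coeff (i + j - x) P := by
    rw [coeff_mul, Nat.sum_antidiagonal_eq_sum_range_succ_mk]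
  rw [← sum_sdiff (range_subset_range.mpr (show j + 1 ≤ i + j + 1 by omega))] at hsplit
  rw [eq_sub_of_add_eq' hsplit.symm]
  refine dvd_sub ?_ (dvd_sum fun x hx => Dvd.dvd.mul_right ?_ _)
  · exact (pow_dvd_pow l (Nat.mul_le_mul_left C (by omega))).trans (hWP _)
  · rw [mem_sdiff, mem_range, mem_range] at hx
    exact (pow_dvd_pow l (Nat.mul_le_mul_left C (by omega))).trans (hW _)

theorem pow_sum_dvd_det {ι : Type*} [Fintype ι] [DecidableEq ι] {e : ι → ℕ} {A : Matrix ι ι R}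
    (h : ∀ i j, l ^ e j ∣ A i j) : l ^ ∑ j, e j ∣ A.det := by
  rw [Matrix.det_apply', ← prod_pow_eq_pow_sum]
  exact dvd_sum fun σ _ => (prod_dvd_prod_of_dvd _ _ fun i _ => h _ i).mul_left _

/- Column operations with the coefficients of the denominator turn the entries of the Hankel matrix
into partial convolutions. -/
theorem IsOverconvergentQuotient.pow_dvd_det_hankel {P : R⟦X⟧}
    (hP : IsOverconvergentQuotient l C K P) (k : ℕ) :
    l ^ (∑ j ∈ range k, C * (j - K)) ∣ (hankel (fun m => coeff m P) k).det := by
  obtain ⟨W, hW, hW1, hWP⟩ := hP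
  let U : Matrix (Fin k) (Fin k) R := Matrix.of fun i j => if i ≤ j then coeff (j - i : ℕ) W else 0
  have hU : U.det = 1 := by
    have htri : U.IsUpperTriangular := fun i j hij => if_neg (not_le.mpr hij)
    rw [Matrix.det_of_isUpperTriangular htri]
    exact prod_eq_one fun i _ => by simp [U, hW1]
  rw [← mul_one (Matrix.det _), ← hU, ← Matrix.det_mul, ← Fin.sum_univ_eq_sum_range
    (fun j => C * (j - K))]
  refine pow_sum_dvd_det fun i j => ?_
  have hentry : (hankel (fun m => coeff m P) k * U) i j =
      ∑ x ∈ range (j + 1), coeff x W * coeff (i + j - x : ℕ) P := by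
    simp only [Matrix.mul_apply, hankel, U, Matrix.of_apply, Fin.le_def]
    rw [Fin.sum_univ_eq_sum_range (fun x => coeff (i + x : ℕ) P *
      if x ≤ (j : ℕ) then coeff (j - x : ℕ) W else 0),
      ← sum_subset (s₁ := range (j + 1)) (range_subset_range.mpr (by omega))
        fun x _ hx => by rw [if_neg (by simpa using hx), mul_zero],
      ← sum_range_reflect]
    refine sum_congr rfl fun x hx => ?_
    rw [mem_range] at hx
    rw [if_pos (by omega), mul_comm]
    congr 3 <;> omega
  rw [hentry]
  exact pow_dvd_sum_coeff_mul_coeff hW hWP i j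

section Trace

variable {ι : Type*} [Fintype ι] [DecidableEq ι]

/-- The generating series `∑ (B ^ m) X ^ m`, as a matrix of power series. -/
noncomputable def resolvent (B : Matrix ι ι R) : Matrix ι ι R⟦X⟧ :=
  Matrix.of fun i j => PowerSeries.mk fun m => (B ^ m) i j

/-- The generating series `∑_{m ≥ 1} tr (B ^ m) X ^ m`. -/
noncomputable def traceSeries (B : Matrix ι ι R) : R⟦X⟧ :=
  PowerSeries.mk fun m => if m = 0 then 0 else (B ^ m).trace

/-- The matrix `X B` of power series. -/
noncomputable def XMul (B : Matrix ι ι R) : Matrix ι ι R⟦X⟧ :=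
  Matrix.of fun i j => X * PowerSeries.C (B i j)

theorem coeff_XMul_mul_resolvent (B : Matrix ι ι R) (i j : ι) (m : ℕ) :
    coeff m ((XMul B * resolvent B) i j) = if m = 0 then 0 else (B ^ m) i j := by
  simp only [Matrix.mul_apply, map_sum, XMul, resolvent, Matrix.of_apply, mul_assoc]
  cases m with
  | zero => simp
  | succ m => simp [coeff_succ_X_mul, pow_succ', Matrix.mul_apply]

theorem one_sub_XMul_mul_resolvent (B : Matrix ι ι R) : (1 - XMul B) * resolvent B = 1 := by
  ext i j m
  rw [sub_mul, one_mul, Matrix.sub_apply, map_sub, coeff_XMul_mul_resolvent, Matrix.one_apply]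
  rcases eq_or_ne m 0 with rfl | hm
  · simp only [resolvent, Matrix.of_apply, coeff_mk, pow_zero, if_true, Matrix.one_apply]
    split_ifs <;> simp
  · simp only [resolvent, Matrix.of_apply, coeff_mk, if_neg hm, sub_self]
    split_ifs <;> simp [coeff_one, hm]

theorem trace_XMul_mul_resolvent (B : Matrix ι ι R) :
    (XMul B * resolvent B).trace = traceSeries B := by
  ext m
  simp only [Matrix.trace, map_sum, Matrix.diag_apply, coeff_XMul_mul_resolvent, traceSeries,
    coeff_mk]
  split_ifs <;> simp

theorem det_one_sub_XMul_mul_traceSeries (B : Matrix ι ι R) :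
    (1 - XMul B).det * traceSeries B = (XMul B * (1 - XMul B).adjugate).trace := by
  have hadj : (1 - XMul B).adjugate = (1 - XMul B).det • resolvent B := by
    calc (1 - XMul B).adjugate = (1 - XMul B).adjugate * ((1 - XMul B) * resolvent B) := by
          rw [one_sub_XMul_mul_resolvent, mul_one]
      _ = (1 - XMul B).det • resolvent B := by
          rw [← mul_assoc, Matrix.adjugate_mul, Matrix.smul_mul, one_mul]
  rw [hadj, Matrix.mul_smul, Matrix.trace_smul, trace_XMul_mul_resolvent, smul_eq_mul]

theorem constantCoeff_det_one_sub_XMul (B : Matrix ι ι R) :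
    constantCoeff (1 - XMul B).det = 1 := by
  rw [RingHom.map_det]
  have h : (constantCoeff (R := R)).mapMatrix (1 - XMul B) = 1 := by
    ext i j
    simp [XMul, Matrix.one_apply]
  rw [h, Matrix.det_one]

theorem isOverconvergentQuotient_traceSeries {B : Matrix ι ι R} {s : Finset ι} (hs : #s ≤ K)
    (hB : ∀ u ∉ s, ∀ v, l ^ C ∣ B u v) :
    IsOverconvergentQuotient l C (K + 1) (traceSeries B) := by
  let e : ι → ℕ := fun u => if u ∈ s then 1 else 0
  have he : ∑ u, e u ≤ K := by simpa [e] using hs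
  have hXB : ∀ u v, XMul B u v ∈ overconvergent l C (e u) := by
    intro u v
    refine X_mul_C_mem_overconvergent ?_
    by_cases hu : u ∈ s
    · simp [e, hu]
    · simpa [e, hu] using hB u hu v
  have hsub : ∀ u v, (1 - XMul B) u v ∈ overconvergent l C (e u) := fun u v =>
    Submodule.sub_mem _ (one_apply_mem_overconvergent u v) (hXB u v)
  refine ⟨(1 - XMul B).det, overconvergent_mono (by omega) (det_mem_overconvergent hsub),
    constantCoeff_det_one_sub_XMul B, ?_⟩
  rw [det_one_sub_XMul_mul_traceSeries]
  refine Submodule.sum_mem _ fun i _ => ?_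
  rw [Matrix.diag_apply, Matrix.mul_apply]
  refine Submodule.sum_mem _ fun j _ => ?_
  rw [mul_comm]
  refine mul_mem_overconvergent (overconvergent_mono he ?_)
    (overconvergent_mono (by simp only [e]; split_ifs <;> omega) (hXB i j))
  rw [Matrix.adjugate_apply]
  refine det_mem_overconvergent fun u v => ?_
  rw [Matrix.updateRow_apply]
  split_ifs
  · rw [← Matrix.one_eq_pi_single]
    exact one_apply_mem_overconvergent _ _
  · exact hsub u v

theorem isOverconvergentQuotient_pow_sub_one_mul_trace {B : Matrix ι ι R} {s : Finset ι}
    (hs : #s ≤ K) (hB : ∀ u ∉ s, ∀ v, l ^ C ∣ B u v) (q : R) (d : ℕ) :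
    IsOverconvergentQuotient l C ((d + 1) * (K + 1))
      (PowerSeries.mk fun m => if m = 0 then 0 else (q ^ m - 1) ^ d * (B ^ m).trace) := by
  have hexpand : (PowerSeries.mk fun m => if m = 0 then 0 else (q ^ m - 1) ^ d * (B ^ m).trace) =
      ∑ i ∈ range (d + 1), ((-1) ^ (d - i) * (d.choose i : R)) • traceSeries (q ^ i • B) := by
    ext m
    simp only [map_sum, traceSeries, coeff_smul, coeff_mk]
    split_ifs with hm
    · simp
    · rw [sub_eq_add_neg, add_pow, sum_mul]
      refine sum_congr rfl fun i _ => ?_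
      rw [smul_pow, Matrix.trace_smul, smul_eq_mul, smul_eq_mul, ← pow_mul, ← pow_mul, mul_comm m i]
      ring
  have hsum : IsOverconvergentQuotient l C (∑ _i ∈ range (d + 1), (K + 1))
      (∑ i ∈ range (d + 1), ((-1) ^ (d - i) * (d.choose i : R)) • traceSeries (q ^ i • B)) :=
    .sum fun i _ => (isOverconvergentQuotient_traceSeries hs fun u hu v => by
      rw [Matrix.smul_apply, smul_eq_mul]
      exact (hB u hu v).mul_left _).smul _
  rw [hexpand]
  simpa using hsum

end Trace

end Overconvergent

section BorelDwork

theorem abs_det_hankel_le {a : ℕ → ℤ} {b : ℕ} (ha : ∀ m, |a m| ≤ (2 ^ b) ^ m) (k : ℕ) :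
    |(hankel a k).det| ≤ 2 ^ ((2 * b + 1) * k ^ 2) := by
  have hentry : ∀ i j, |hankel a k i j| ≤ 2 ^ (b * (2 * k)) := fun i j =>
    (ha _).trans <| by
      rw [← pow_mul]
      exact pow_le_pow_right₀ (by norm_num) (Nat.mul_le_mul_left b (by omega))
  have hfact : (k.factorial : ℤ) ≤ 2 ^ (k * k) := by
    rw [pow_mul]
    exact_mod_cast (Nat.factorial_le_pow k).trans (Nat.pow_le_pow_left Nat.lt_two_pow_self.le k)
  calc |(hankel a k).det| ≤ k.factorial • (2 ^ (b * (2 * k))) ^ k := by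
        simpa using Matrix.det_le (abv := AbsoluteValue.abs) hentry
    _ ≤ 2 ^ (k * k) * 2 ^ (b * (2 * k) * k) := by
        rw [nsmul_eq_mul, ← pow_mul]
        exact mul_le_mul_of_nonneg_right hfact (by positivity)
    _ = 2 ^ ((2 * b + 1) * k ^ 2) := by rw [← pow_add]; ring_nf

theorem sq_le_four_mul_sum_sub {k K : ℕ} (hk : 4 * K + 2 ≤ k) :
    k ^ 2 ≤ 4 * ∑ j ∈ range k, (j - K) := by
  have hsum : ∑ j ∈ range k, j ≤ ∑ j ∈ range k, (j - K) + k * K := by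
    calc ∑ j ∈ range k, j ≤ ∑ j ∈ range k, (j - K + K) := sum_le_sum fun j _ => by omega
      _ = ∑ j ∈ range k, (j - K) + k * K := by simp [sum_add_distrib]
  obtain ⟨k, rfl⟩ := Nat.exists_eq_add_of_le' (show 1 ≤ k by omega)
  have := sum_range_id_mul_two (k + 1)
  simp only [Nat.add_sub_cancel] at this
  nlinarith

theorem pow_dvd_det_hankel_of_approx {R : Type*} [CommRing R] {l : R} {C K k M : ℕ} {a : ℕ → ℤ}
    {P : R⟦X⟧} (hP : IsOverconvergentQuotient l C K P) (hM : M ≤ ∑ j ∈ range k, C * (j - K))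
    (ha : ∀ m, l ^ M ∣ (a m : R) - coeff m P) : l ^ M ∣ ((hankel a k).det : R) := by
  let φ := Ideal.Quotient.mk (Ideal.span {l ^ M})
  have hφ : φ ((hankel a k).det : R) = φ (hankel (fun m => coeff m P) k).det := by
    rw [← eq_intCast (Int.castRingHom R), RingHom.map_det, RingHom.map_det, RingHom.map_det]
    congr 1
    ext i j
    exact Ideal.Quotient.mk_eq_mk_iff_sub_mem _ _ |>.mpr (Ideal.mem_span_singleton.mpr (ha _))
  rw [Ideal.Quotient.mk_eq_mk_iff_sub_mem, Ideal.mem_span_singleton] at hφ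
  simpa using dvd_add hφ ((pow_dvd_pow l hM).trans (hP.pow_dvd_det_hankel k))

/- The Borel–Dwork criterion: the Hankel determinants are integers which are at most exponential in
`k ^ 2`, but divisible by a larger power of `p`. -/
theorem eventually_det_hankel_eq_zero {R : Type*} [CommRing R] {l : R} {p N : ℕ} (hp : 2 ≤ p)
    (hint : ∀ (z : ℤ) (k : ℕ), l ^ (N * k) ∣ (z : R) → (p : ℤ) ^ k ∣ z)
    {a : ℕ → ℤ} {B : ℕ} (ha : ∀ m, |a m| ≤ (B : ℤ) ^ m)
    (happrox : ∀ C : ℕ, ∃ K : ℕ, ∀ M : ℕ, ∃ P : R⟦X⟧, IsOverconvergentQuotient l C K P ∧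
      ∀ m, l ^ M ∣ (a m : R) - coeff m P) :
    ∃ k₀, ∀ k, k₀ ≤ k → (hankel a k).det = 0 := by
  have ha' : ∀ m, |a m| ≤ (2 ^ B : ℤ) ^ m := fun m =>
    (ha m).trans (pow_le_pow_left₀ (by positivity) (by exact_mod_cast Nat.lt_two_pow_self.le) m)
  obtain ⟨K, hK⟩ := happrox (N * (4 * (2 * B + 2)))
  refine ⟨4 * K + 2, fun k hk => ?_⟩
  set G := 4 * (2 * B + 2) * ∑ j ∈ range k, (j - K) with hG
  have hkG : (2 * B + 2) * k ^ 2 ≤ G := by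
    rw [hG, mul_comm 4, mul_assoc]
    exact Nat.mul_le_mul_left _ (sq_le_four_mul_sum_sub hk)
  obtain ⟨P, hP, haP⟩ := hK (N * G)
  have hdvd : (p : ℤ) ^ G ∣ (hankel a k).det := by
    refine hint _ _ (pow_dvd_det_hankel_of_approx hP ?_ haP)
    rw [hG, ← mul_sum, mul_assoc N]
  by_contra hne
  have hlt : (2 : ℤ) ^ ((2 * B + 1) * k ^ 2) < (p : ℤ) ^ G :=
    calc (2 : ℤ) ^ ((2 * B + 1) * k ^ 2) < 2 ^ ((2 * B + 2) * k ^ 2) := by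
          refine pow_lt_pow_right₀ (by norm_num) (Nat.mul_lt_mul_of_pos_right (by omega) ?_)
          exact pow_pos (by omega) 2
      _ ≤ 2 ^ G := pow_le_pow_right₀ (by norm_num) hkG
      _ ≤ (p : ℤ) ^ G := pow_le_pow_left₀ (by norm_num) (by exact_mod_cast hp) _
  exact (hlt.trans_le (Int.le_of_dvd (abs_pos.mpr hne) ((dvd_abs _ _).mpr hdvd))).not_ge
    (abs_det_hankel_le ha' k)

end BorelDwork

section LogarithmicDerivative

variable {A : Type*} [CommRing A]

/-- `L` is the logarithmic derivative `X f' / f` of the power series `f`, expressed without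
division. -/
def HasLogDeriv (f L : A⟦X⟧) : Prop :=
  X * derivative A f = f * L

theorem coeff_X_mul_derivative (f : A⟦X⟧) (n : ℕ) :
    coeff n (X * derivative A f) =
      n * coeff n f := by
  cases n with
  | zero => simp
  | succ n => rw [coeff_succ_X_mul, coeff_derivative]; push_cast; ring

theorem HasLogDeriv.natCast_mul_coeff {f L : A⟦X⟧} (h : HasLogDeriv f L) (n : ℕ) :
    n * coeff n f = coeff n (f * L) := by
  rw [← h, coeff_X_mul_derivative]

theorem HasLogDeriv.one : HasLogDeriv (1 : A⟦X⟧) 0 := by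
  simp [HasLogDeriv]

theorem HasLogDeriv.mul {f g L M : A⟦X⟧} (hf : HasLogDeriv f L) (hg : HasLogDeriv g M) :
    HasLogDeriv (f * g) (L + M) := by
  unfold HasLogDeriv at *
  rw [Derivation.leibniz, smul_eq_mul, smul_eq_mul]
  linear_combination g * hf + f * hg

theorem HasLogDeriv.prod {ι : Type*} {s : Finset ι} {f L : ι → A⟦X⟧}
    (h : ∀ i ∈ s, HasLogDeriv (f i) (L i)) : HasLogDeriv (∏ i ∈ s, f i) (∑ i ∈ s, L i) := by
  classical
  induction s using Finset.induction_on with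
  | empty => simpa using HasLogDeriv.one
  | insert a s ha ih =>
    rw [prod_insert ha, sum_insert ha]
    exact (h a (mem_insert_self a s)).mul (ih fun i hi => h i (mem_insert_of_mem hi))

theorem HasLogDeriv.pow {f L : A⟦X⟧} (hf : HasLogDeriv f L) (k : ℕ) :
    HasLogDeriv (f ^ k) (k • L) := by
  simpa using HasLogDeriv.prod (s := range k) (fun _ _ => hf)

theorem pow_dvd_of_pow_dvd_natCast_mul {p : ℕ} (hp : p.Prime)
    (hreg : IsLeftRegular (p : A)) {n T : ℕ} (hn : n ≠ 0) {x : A}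
    (h : (p : A) ^ (T + n) ∣ n * x) : (p : A) ^ T ∣ x := by
  obtain ⟨v, u, hu, rfl⟩ := Nat.exists_eq_pow_mul_and_not_dvd hn p hp.ne_one
  have hv : v ≤ p ^ v * u :=
    (Nat.lt_pow_self hp.one_lt).le.trans
      (Nat.le_mul_of_pos_right _ (Nat.pos_of_ne_zero (right_ne_zero_of_mul hn)))
  have hcop : IsCoprime ((p : A) ^ T) (u : A) := by
    have := ((Nat.isCoprime_iff_coprime.mpr
      ((hp.coprime_iff_not_dvd).mpr hu)).map (Int.castRingHom A)).pow_left (m := T)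
    simpa using this
  obtain ⟨y, hy⟩ := (pow_dvd_pow (p : A) (Nat.add_le_add_left hv T)).trans h
  refine hcop.dvd_of_dvd_mul_left ⟨y, hreg.pow v ?_⟩
  push_cast at hy
  linear_combination hy

/- The logarithmic derivatives determine the coefficients recursively, dividing by `n` at the
`n`-th step; the exponent `M * M` pays for these divisions. -/
theorem HasLogDeriv.pow_dvd_coeff_sub {p : ℕ} (hp : p.Prime)
    (hreg : IsLeftRegular (p : A)) {f g L L' : A⟦X⟧}
    (hf : HasLogDeriv f L) (hg : HasLogDeriv g L')
    (hf0 : constantCoeff f = 1) (hg0 : constantCoeff g = 1) {T M : ℕ}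
    (hL : ∀ n < M, (p : A) ^ (T + M * M) ∣ coeff n (L - L')) {n : ℕ} (hn : n < M) :
    (p : A) ^ T ∣ coeff n (f - g) := by
  suffices H : ∀ n < M, (p : A) ^ (T + M * (M - n)) ∣ coeff n (f - g) from
    (pow_dvd_pow _ (Nat.le_add_right _ _)).trans (H n hn)
  intro n
  induction n using Nat.strong_induction_on with
  | _ n ih =>
  intro hn
  rcases Nat.eq_zero_or_pos n with rfl | hpos
  · simp [hf0, hg0]
  have hL'0 : constantCoeff L' = 0 := by
    simpa [hg0] using (hg.natCast_mul_coeff 0).symm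
  have hexp : ∀ i < n, T + M * (M - n) + n ≤ T + M * (M - i) := by
    intro i hi
    have : M * (M - n + 1) ≤ M * (M - i) := Nat.mul_le_mul_left M (by omega)
    rw [mul_add, mul_one] at this
    omega
  have hmul : (n : A) * coeff n (f - g) =
      coeff n (f * (L - L')) + coeff n ((f - g) * L') := by
    rw [map_sub, mul_sub, hf.natCast_mul_coeff, hg.natCast_mul_coeff, ← map_sub, ← map_add]
    congr 1; ring
  refine pow_dvd_of_pow_dvd_natCast_mul hp hreg hpos.ne' (hmul ▸ dvd_add ?_ ?_)
  · rw [coeff_mul]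
    refine dvd_sum fun x hx => Dvd.dvd.mul_left ((pow_dvd_pow _ (hexp 0 hpos)).trans ?_) _
    rw [HasAntidiagonal.mem_antidiagonal] at hx
    exact hL _ (by omega)
  · rw [coeff_mul]
    refine dvd_sum fun x hx => ?_
    rw [HasAntidiagonal.mem_antidiagonal] at hx
    rcases (show x.1 ≤ n by omega).lt_or_eq with hlt | heq
    · exact Dvd.dvd.mul_right ((pow_dvd_pow _ (hexp _ hlt)).trans (ih _ hlt (hlt.trans hn))) _
    · have h2 : x.2 = 0 := by omega
      simp [h2, hL'0]

end LogarithmicDerivative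

section Geometric

variable {A : Type*} [CommRing A]

/-- The geometric series `1 / (1 - b X ^ m)`, for `m ≠ 0`. -/
def geomSeries (m : ℕ) (b : A) : A⟦X⟧ :=
  PowerSeries.mk fun j => if m ∣ j then b ^ (j / m) else 0

theorem geomSeries_mul_one_sub {m : ℕ} (hm : m ≠ 0) (b : A) :
    geomSeries m b * (1 - C b * X ^ m) = 1 := by
  have h : geomSeries m b = expand m hm (rescale b (PowerSeries.mk 1)) := by
    ext j
    simp [geomSeries, coeff_expand, coeff_rescale]
  have h' := congrArg (expand m hm)
    (congrArg (rescale b) (PowerSeries.mk_one_mul_one_sub_eq_one A))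
  simpa [← h, expand_C] using h'

theorem constantCoeff_geomSeries (m : ℕ) (b : A) :
    constantCoeff (geomSeries m b) = 1 := by
  simp [← coeff_zero_eq_constantCoeff_apply, geomSeries]

theorem rescale_geomSeries (a : A) (m : ℕ) (b : A) :
    rescale a (geomSeries m b) = geomSeries m (a ^ m * b) := by
  ext j
  simp only [geomSeries, coeff_rescale, coeff_mk]
  split_ifs with h
  · rw [mul_pow, ← pow_mul, Nat.mul_div_cancel' h]
  · rw [mul_zero]

theorem hasLogDeriv_geomSeries {m : ℕ} (hm : m ≠ 0) (b : A) :
    HasLogDeriv (geomSeries m b) (m • (geomSeries m b - 1)) := by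
  have hinv := geomSeries_mul_one_sub hm b
  have hX : (X : A⟦X⟧) * X ^ (m - 1) = X ^ m := by
    rw [← pow_succ', Nat.sub_add_cancel (Nat.pos_of_ne_zero hm)]
  have hD := congrArg (derivative A) hinv
  simp only [Derivation.leibniz, smul_eq_mul, map_sub, Derivation.map_one_eq_zero,
    Derivation.leibniz_pow, derivative_C, derivative_X] at hD
  unfold HasLogDeriv
  simp only [nsmul_eq_mul] at hD ⊢
  set g := geomSeries m b
  set D := derivative A g
  linear_combination (X * g) * hD + (-m * g - X * D) * hinv +
    (m * g ^ 2 * C b) * hX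

end Geometric

theorem coeff_nsmul_geomSeries_sub_one {A : Type*} [CommRing A] (c m : ℕ) (b : A) {N : ℕ}
    (hN : N ≠ 0) :
    coeff N (c • m • (geomSeries m b - 1)) = c * m * if m ∣ N then b ^ (N / m) else 0 := by
  rw [map_nsmul, map_nsmul, map_sub, coeff_one, if_neg hN, sub_zero, geomSeries, coeff_mk,
    nsmul_eq_mul, nsmul_eq_mul, mul_assoc]

section Moebius

open ArithmeticFunction (moebius)

theorem filter_not_dvd_divisors {p : ℕ} (hp : p.Prime) {d : ℕ} (hd : d ≠ 0) :
    {n ∈ d.divisors | ¬ p ∣ n} = (ordCompl[p] d).divisors := by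
  ext n
  simp only [mem_filter, Nat.mem_divisors]
  constructor
  · rintro ⟨⟨hnd, -⟩, hpn⟩
    refine ⟨?_, (Nat.ordCompl_pos p hd).ne'⟩
    rw [← Nat.ordProj_mul_ordCompl_eq_self d p] at hnd
    exact (((hp.coprime_iff_not_dvd).mpr hpn).pow_left _).symm.dvd_of_dvd_mul_left hnd
  · rintro ⟨hn, -⟩
    exact ⟨⟨hn.trans (Nat.ordCompl_dvd d p), hd⟩,
      fun h => Nat.not_dvd_ordCompl hp hd (h.trans hn)⟩

theorem sum_moebius_filter_not_dvd {p : ℕ} (hp : p.Prime) {d : ℕ} (hd : d ≠ 0) :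
    ∑ n ∈ d.divisors with ¬ p ∣ n, moebius n = if ordCompl[p] d = 1 then 1 else 0 := by
  rw [filter_not_dvd_divisors hp hd, ← ArithmeticFunction.coe_mul_zeta_apply,
    ArithmeticFunction.moebius_mul_coe_zeta, ArithmeticFunction.one_apply]

theorem sum_divisors_smul_moebius {A : Type*} [AddCommGroup A] {p : ℕ} (hp : p.Prime) (f : ℕ → A)
    {N : ℕ} (hN : N ≠ 0) :
    ∑ k ∈ N.divisors with ¬ p ∣ k,
      (∑ n ∈ (N / k).divisors with ¬ p ∣ n, moebius n) • f (N / k) = f (ordProj[p] N) := by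
  have hproj := Nat.ordProj_mul_ordCompl_eq_self N p
  have hcompl := Nat.ordCompl_pos p hN
  have hdiv : N / ordCompl[p] N = ordProj[p] N :=
    Nat.div_eq_of_eq_mul_left hcompl hproj.symm
  rw [sum_eq_single (ordCompl[p] N)]
  · rw [hdiv, sum_moebius_filter_not_dvd hp (Nat.ordProj_pos N p).ne', Nat.ordCompl_self_pow hp,
      if_pos rfl, one_smul]
  · intro k hk hne
    rw [mem_filter, Nat.mem_divisors] at hk
    obtain ⟨⟨⟨d, rfl⟩, -⟩, hpk⟩ := hk
    have hd := right_ne_zero_of_mul hN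
    rw [Nat.mul_div_cancel_left d (Nat.pos_of_ne_zero (left_ne_zero_of_mul hN)),
      sum_moebius_filter_not_dvd hp hd, if_neg, zero_smul]
    intro hd1
    rw [Nat.ordCompl_mul, hd1, mul_one,
      (Nat.ordCompl_eq_self_iff_zero_or_not_dvd k hp).mpr (Or.inr hpk)] at hne
    exact hne rfl
  · intro h
    exact absurd (mem_filter.mpr ⟨Nat.mem_divisors.mpr ⟨Nat.ordCompl_dvd N p, hN⟩,
      Nat.not_dvd_ordCompl hp hN⟩) h

end Moebius

section TruncatedEvaluation

variable {A S : Type*} [CommRing A] [CommRing S]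

theorem eval₂_trunc_coe (φ : A →+* S) {l : S} {M : ℕ} (hl : l ^ M = 0) (P : Polynomial A) :
    (trunc M (P : A⟦X⟧)).eval₂ φ l = P.eval₂ φ l := by
  have hdvd : Polynomial.X ^ M ∣ trunc M (P : A⟦X⟧) - P := by
    refine Polynomial.X_pow_dvd_iff.mpr fun d hd => ?_
    rw [Polynomial.coeff_sub, coeff_trunc, if_pos hd, Polynomial.coeff_coe, sub_self]
  obtain ⟨Q, hQ⟩ := hdvd
  rw [← sub_eq_zero, ← Polynomial.eval₂_sub, hQ, Polynomial.eval₂_mul, Polynomial.eval₂_X_pow, hl,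
    zero_mul]

/-- Evaluation of power series at an element `l` with `l ^ M = 0`. -/
noncomputable def evalNilpotent (φ : A →+* S) {l : S} {M : ℕ} (hl : l ^ M = 0) : A⟦X⟧ →+* S where
  toFun f := (trunc M f).eval₂ φ l
  map_one' := by rw [← Polynomial.coe_one, eval₂_trunc_coe φ hl, Polynomial.eval₂_one]
  map_zero' := by simp
  map_add' f g := by simp
  map_mul' f g := by
    rw [← trunc_trunc_mul_trunc, ← Polynomial.coe_mul, eval₂_trunc_coe φ hl, Polynomial.eval₂_mul]

theorem evalNilpotent_apply (φ : A →+* S) {l : S} {M : ℕ} (hl : l ^ M = 0) (f : A⟦X⟧) :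
    evalNilpotent φ hl f = ∑ i ∈ range M, φ (coeff i f) * l ^ i :=
  eval₂_trunc_eq_sum_range l φ M f

theorem evalNilpotent_geomSeries_mul (φ : A →+* S) {l : S} {M : ℕ} (hl : l ^ M = 0) {m : ℕ}
    (hm : m ≠ 0) (b : A) : evalNilpotent φ hl (geomSeries m b) * (1 - φ b * l ^ m) = 1 := by
  have hcoe : (1 - C b * X ^ m : A⟦X⟧) =
      (1 - Polynomial.C b * Polynomial.X ^ m : Polynomial A) := by simp
  have hpoly : evalNilpotent φ hl (1 - C b * X ^ m) = 1 - φ b * l ^ m := by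
    rw [hcoe]
    exact (eval₂_trunc_coe φ hl _).trans (by simp)
  rw [← hpoly, ← map_mul, geomSeries_mul_one_sub hm, map_one]

end TruncatedEvaluation

section Splitting

variable {A : Type*} [CommRing A] (p M : ℕ)

/-- The positive integers less than `M` that are not divisible by the prime `p`. -/
def primeToBelow : Finset ℕ :=
  {k ∈ range M | ¬ p ∣ k}

/-- A natural number congruent modulo `p ^ K` to the exponent `μ(n) / (k n)`, where
`x = (k, n)`. -/
def moebiusExponent (K : ℕ) (x : ℕ × ℕ) : ℕ :=
  (((x.1 * x.2 : ℕ) : ZMod (p ^ K))⁻¹ * (ArithmeticFunction.moebius x.2 : ZMod (p ^ K))).val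

/-- A truncation of the product `∏ (1 - a ^ n X ^ (k n)) ^ (-μ(n) / (k n))` over the pairs `(k, n)`
of positive integers prime to `p`. Its factors with `k = 1` form Möbius' product formula for the
Artin–Hasse exponential at `a X`. -/
noncomputable def moebiusProd (K : ℕ) (a : A) : A⟦X⟧ :=
  ∏ x ∈ primeToBelow p M ×ˢ primeToBelow p M,
    geomSeries (x.1 * x.2) (a ^ x.2) ^ moebiusExponent p K x

variable {p M}

theorem mul_ne_zero_of_mem_primeToBelow {x : ℕ × ℕ}
    (hx : x ∈ primeToBelow p M ×ˢ primeToBelow p M) : x.1 * x.2 ≠ 0 := by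
  simp only [primeToBelow, mem_product, mem_filter] at hx
  exact mul_ne_zero (fun h => hx.1.2 (h ▸ dvd_zero p)) (fun h => hx.2.2 (h ▸ dvd_zero p))

theorem pow_dvd_mul_moebiusExponent_sub (hp : p.Prime) (K : ℕ) {x : ℕ × ℕ}
    (hx : x ∈ primeToBelow p M ×ˢ primeToBelow p M) :
    (p : A) ^ K ∣
      moebiusExponent p K x * (x.1 * x.2 : ℕ) - (ArithmeticFunction.moebius x.2 : A) := by
  have : NeZero (p ^ K) := ⟨pow_ne_zero K hp.ne_zero⟩
  simp only [primeToBelow, mem_product, mem_filter] at hx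
  obtain ⟨⟨-, h1⟩, -, h2⟩ := hx
  have hcop : (x.1 * x.2).Coprime (p ^ K) := Nat.Coprime.pow_right K <| Nat.Coprime.mul_left
    ((hp.coprime_iff_not_dvd).mpr h1).symm ((hp.coprime_iff_not_dvd).mpr h2).symm
  have hZ : ((p ^ K : ℕ) : ℤ) ∣
      moebiusExponent p K x * (x.1 * x.2 : ℕ) - ArithmeticFunction.moebius x.2 := by
    rw [← ZMod.intCast_zmod_eq_zero_iff_dvd]
    have hinv := ZMod.coe_mul_inv_eq_one _ hcop
    push_cast [moebiusExponent, ZMod.natCast_val, ZMod.cast_id] at hinv ⊢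
    linear_combination (ArithmeticFunction.moebius x.2 : ZMod (p ^ K)) * hinv
  simpa using map_dvd (Int.castRingHom A) hZ

theorem constantCoeff_moebiusProd (K : ℕ) (a : A) :
    constantCoeff (moebiusProd p M K a) = 1 := by
  simp [moebiusProd, constantCoeff_geomSeries]

theorem sum_primeToBelow_moebius {B : Type*} [AddCommGroup B] (hp : p.Prime) (f : ℕ → B)
    {N : ℕ} (hN : N ≠ 0) (hNM : N < M) :
    ∑ x ∈ primeToBelow p M ×ˢ primeToBelow p M,
      (if x.1 * x.2 ∣ N then ArithmeticFunction.moebius x.2 • f (N / x.1) else 0) =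
      f (ordProj[p] N) := by
  rw [← sum_divisors_smul_moebius hp f hN, sum_product]
  symm
  have hlt : ∀ {k}, k ∣ N → k < M := fun h => (Nat.le_of_dvd (Nat.pos_of_ne_zero hN) h).trans_lt hNM
  refine sum_subset_zero_on_sdiff (fun k hk => ?_) (fun k hk => ?_) (fun k hk => ?_)
  · rw [mem_filter, Nat.mem_divisors] at hk
    exact mem_filter.mpr ⟨mem_range.mpr (hlt hk.1.1), hk.2⟩
  · rw [mem_sdiff, mem_filter, Nat.mem_divisors, primeToBelow, mem_filter] at hk
    exact sum_eq_zero fun n _ => if_neg fun h =>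
      hk.2 ⟨⟨dvd_of_mul_right_dvd h, hN⟩, hk.1.2⟩
  · rw [mem_filter, Nat.mem_divisors] at hk
    rw [sum_smul, ← sum_filter]
    refine sum_congr (ext fun n => ?_) fun n _ => rfl
    obtain ⟨⟨⟨d, rfl⟩, -⟩, -⟩ := hk
    have hk0 := left_ne_zero_of_mul hN
    rw [Nat.mul_div_cancel_left d (Nat.pos_of_ne_zero hk0)]
    simp only [primeToBelow, mem_filter, Nat.mem_divisors, mem_range,
      Nat.mul_dvd_mul_iff_left (Nat.pos_of_ne_zero hk0)]
    have := right_ne_zero_of_mul hN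
    exact ⟨fun h => ⟨⟨hlt (h.1.1.mul_left k), h.2⟩, h.1.1⟩, fun h => ⟨⟨h.2, this⟩, h.1.2⟩⟩

theorem exists_hasLogDeriv_moebiusProd (hp : p.Prime) (K : ℕ) (a : A) :
    ∃ L, HasLogDeriv (moebiusProd p M K a) L ∧
      ∀ N < M, (p : A) ^ K ∣ coeff N L - if N = 0 then 0 else a ^ ordProj[p] N := by
  refine ⟨_, HasLogDeriv.prod fun x hx =>
    (hasLogDeriv_geomSeries (mul_ne_zero_of_mem_primeToBelow hx) (a ^ x.2)).pow _, fun N hNM => ?_⟩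
  rcases eq_or_ne N 0 with rfl | hN
  · simp [constantCoeff_geomSeries]
  rw [if_neg hN, ← sum_primeToBelow_moebius hp (fun d => a ^ d) hN hNM, map_sum, ← sum_sub_distrib]
  refine dvd_sum fun x hx => ?_
  rw [coeff_nsmul_geomSeries_sub_one _ _ _ hN]
  split_ifs with h
  · obtain ⟨d, rfl⟩ := h
    have hx0 := mul_ne_zero_of_mem_primeToBelow hx
    rw [Nat.mul_div_cancel_left d (Nat.pos_of_ne_zero hx0), mul_assoc x.1,
      Nat.mul_div_cancel_left _ (Nat.pos_of_ne_zero (left_ne_zero_of_mul hx0)), ← pow_mul,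
      zsmul_eq_mul, ← sub_mul]
    exact (pow_dvd_mul_moebiusExponent_sub hp K hx).mul_right _
  · simp

theorem pow_dvd_coeff_prod_moebiusProd_sub (hp : p.Prime) (hreg : IsLeftRegular (p : A))
    {ι : Type*} {s : Finset ι} {a : ι → A} {c T : ℕ}
    (ha : ∀ v, (p : A) ^ (T + M * M) ∣ ∑ i ∈ s, a i ^ p ^ v - c) {n : ℕ} (hn : n < M) :
    (p : A) ^ T ∣
      coeff n (∏ i ∈ s, moebiusProd p M (T + M * M) (a i) - geomSeries 1 (1 : A) ^ c) := by
  choose L hL hL' using fun i => exists_hasLogDeriv_moebiusProd (M := M) hp (T + M * M) (a i)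
  refine (HasLogDeriv.prod fun i _ => hL i).pow_dvd_coeff_sub hp hreg
    ((hasLogDeriv_geomSeries one_ne_zero 1).pow c) ?_ ?_ (fun N hN => ?_) hn
  · simp [constantCoeff_moebiusProd]
  · simp [constantCoeff_geomSeries]
  have hdvd := dvd_sum fun i (_ : i ∈ s) => hL' i N hN
  rw [sum_sub_distrib] at hdvd
  rcases eq_or_ne N 0 with rfl | hN0
  · simpa [constantCoeff_geomSeries] using hdvd
  · simp only [if_neg hN0] at hdvd
    convert dvd_add hdvd (ha (N.factorization p)) using 1
    rw [map_sub, coeff_nsmul_geomSeries_sub_one c 1 (1 : A) hN0]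
    simp

/-- A splitting function in the sense of Dwork, truncated: the `n`-th coefficient of
`moebiusProd p M K` at the parameter `a`, evaluated at `X = l`, as a power series in `a`. -/
noncomputable def splittingCoeff (p M : ℕ) (l : A) (n : ℕ) : A :=
  l ^ n * coeff n (∏ x ∈ primeToBelow p M ×ˢ primeToBelow p M,
    geomSeries x.2 (l ^ ((x.1 - 1) * x.2)) ^ moebiusExponent p (M + M * M) x)

theorem pow_dvd_splittingCoeff (l : A) (n : ℕ) : l ^ n ∣ splittingCoeff p M l n :=
  dvd_mul_right _ _

theorem evalNilpotent_moebiusProd {S : Type*} [CommRing S] (φ : A →+* S) {l : A}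
    (hl : φ l ^ M = 0) (a : A) :
    evalNilpotent φ hl (moebiusProd p M (M + M * M) a) =
      φ (∑ n ∈ range M, splittingCoeff p M l n * a ^ n) := by
  have hresc : φ (∑ n ∈ range M, splittingCoeff p M l n * a ^ n) =
      evalNilpotent φ hl (rescale a (∏ x ∈ primeToBelow p M ×ˢ primeToBelow p M,
        geomSeries x.2 (l ^ ((x.1 - 1) * x.2)) ^ moebiusExponent p (M + M * M) x)) := by
    rw [evalNilpotent_apply, map_sum]
    refine sum_congr rfl fun n _ => ?_
    rw [coeff_rescale, splittingCoeff]
    simp only [map_mul, map_pow]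
    ring
  rw [hresc, moebiusProd, map_prod, map_prod, map_prod]
  refine prod_congr rfl fun x hx => ?_
  have hx0 := mul_ne_zero_of_mem_primeToBelow hx
  have hxl : φ (a ^ x.2 * l ^ ((x.1 - 1) * x.2)) * φ l ^ x.2 = φ (a ^ x.2) * φ l ^ (x.1 * x.2) := by
    rw [← map_pow, ← map_pow, ← map_mul, ← map_mul, mul_assoc, ← pow_add, ← Nat.succ_mul,
      Nat.succ_eq_add_one, Nat.sub_add_cancel (Nat.pos_of_ne_zero (left_ne_zero_of_mul hx0))]
  have hinv := evalNilpotent_geomSeries_mul φ hl (right_ne_zero_of_mul hx0)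
    (a ^ x.2 * l ^ ((x.1 - 1) * x.2))
  rw [hxl] at hinv
  rw [map_pow, map_pow, map_pow, rescale_geomSeries]
  congr 1
  exact left_inv_eq_right_inv (evalNilpotent_geomSeries_mul φ hl hx0 _)
    ((mul_comm _ _).trans hinv)

/- In `A / (l ^ M)` both sides are values at `X = l`, of `(1 - X) ^ (-c)` on the one hand and of the
product of the series `moebiusProd` at the `a i` on the other. -/
theorem pow_dvd_pow_sub_prod_splittingCoeff (hp : p.Prime) (hreg : IsLeftRegular (p : A)) {l η : A}
    (hlp : l ∣ p) (hη : η * (1 - l) = 1) {ι : Type*} {s : Finset ι} {a : ι → A} {c : ℕ}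
    (ha : ∀ v, (p : A) ^ (M + M * M) ∣ ∑ i ∈ s, a i ^ p ^ v - c) :
    l ^ M ∣ η ^ c - ∏ i ∈ s, ∑ n ∈ range M, splittingCoeff p M l n * a i ^ n := by
  let φ := Ideal.Quotient.mk (Ideal.span {l ^ M})
  have hφ : ∀ x, φ x = 0 ↔ l ^ M ∣ x := fun x =>
    Ideal.Quotient.eq_zero_iff_mem.trans Ideal.mem_span_singleton
  have hl : φ l ^ M = 0 := by rw [← map_pow, hφ]
  have hgeom : evalNilpotent φ hl (geomSeries 1 1) = φ η := by
    refine left_inv_eq_right_inv (evalNilpotent_geomSeries_mul φ hl one_ne_zero 1) ?_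
    simpa [mul_comm] using congrArg φ hη
  have hcong : evalNilpotent φ hl (∏ i ∈ s, moebiusProd p M (M + M * M) (a i)) =
      evalNilpotent φ hl (geomSeries 1 1 ^ c) := by
    rw [← sub_eq_zero, ← map_sub, evalNilpotent_apply]
    refine sum_eq_zero fun n hn => ?_
    have hdvd := (pow_dvd_pow_of_dvd hlp M).trans
      (pow_dvd_coeff_prod_moebiusProd_sub hp hreg ha (mem_range.mp hn))
    rw [(hφ _).mpr hdvd, zero_mul]
  rw [← hφ, map_sub, sub_eq_zero, map_pow, ← hgeom, ← map_pow, ← hcong, map_prod, map_prod]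
  exact prod_congr rfl fun i _ => evalNilpotent_moebiusProd φ hl (a i)

end Splitting

section WittVector

open WittVector

variable {p : ℕ} [Fact p.Prime] {k : Type*} [Field k] [CharP k p]

theorem frobenius_teichmuller (x : k) :
    frobenius (teichmuller p x) = teichmuller p x ^ p := by
  rw [frobenius_eq_map_frobenius, map_teichmuller, ← map_pow]
  rfl

theorem frobenius_teichmuller_pow (x : k) (n : ℕ) :
    frobenius (teichmuller p x ^ n) = (teichmuller p x ^ n) ^ p := by
  rw [map_pow, frobenius_teichmuller, pow_right_comm]

variable [PerfectRing k p]

theorem pow_dvd_of_pow_dvd_intCast_wittVector {z : ℤ} {j : ℕ} (h : (p : WittVector p k) ^ j ∣ z) :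
    (p : ℤ) ^ j ∣ z := by
  induction j generalizing z with
  | zero => simp
  | succ j ih =>
    obtain ⟨w, rfl⟩ : (p : ℤ) ∣ z := by
      have hz : (z : WittVector p k) ∈ Ideal.span {(p : WittVector p k)} :=
        Ideal.mem_span_singleton.mpr ((dvd_pow_self _ j.succ_ne_zero).trans h)
      rw [← ker_constantCoeff, RingHom.mem_ker, map_intCast] at hz
      exact (CharP.intCast_eq_zero_iff k p z).mp hz
    rw [pow_succ', Int.cast_mul, Int.cast_natCast] at h
    rw [pow_succ']
    exact mul_dvd_mul_left _ (ih ((mul_dvd_mul_iff_left (p_nonzero p k)).mp h))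

theorem charZero_wittVector : CharZero (WittVector p k) := by
  refine charZero_of_inj_zero fun n hn => ?_
  by_contra hn0
  have hdvd : ((p : ℕ) : ℤ) ^ n ∣ (n : ℤ) :=
    pow_dvd_of_pow_dvd_intCast_wittVector (p := p) (k := k) (by simp [hn])
  exact (Nat.lt_pow_self (Fact.out : p.Prime).one_lt).not_ge
    (Nat.le_of_dvd (Nat.pos_of_ne_zero hn0) (by exact_mod_cast hdvd))

/- The residue of a Frobenius-fixed element lies in the prime field; subtract a lift and divide by
`p`. -/
theorem exists_natCast_approx_of_frobenius_eq {z : WittVector p k} (hz : frobenius z = z) (K : ℕ) :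
    ∃ c : ℕ, (p : WittVector p k) ^ K ∣ z - c := by
  induction K generalizing z with
  | zero => exact ⟨0, by simp⟩
  | succ K ih =>
    obtain ⟨c₀, hc₀⟩ : ∃ c : ℕ, (c : k) = constantCoeff z := by
      have hfix : z.coeff 0 ^ p = z.coeff 0 := by rw [← coeff_frobenius_charP, hz]
      rw [← Subfield.mem_bot_iff_pow_eq_self k p, ← ZMod.fieldRange_castHom_eq_bot p] at hfix
      obtain ⟨y, hy⟩ := hfix
      exact ⟨y.val, (ZMod.natCast_val y).trans hy⟩
    obtain ⟨y, hy⟩ : (p : WittVector p k) ∣ z - c₀ := by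
      rw [← Ideal.mem_span_singleton, ← ker_constantCoeff, RingHom.mem_ker, map_sub, map_natCast,
        hc₀, sub_self]
    have hyfix : frobenius y = y := by
      refine mul_left_cancel₀ (p_nonzero p k) ?_
      rw [← hy, ← map_natCast (WittVector.frobenius (p := p) (R := k)) p, ← map_mul, ← hy, map_sub,
        hz, map_natCast]
    obtain ⟨c, hc⟩ := ih hyfix
    refine ⟨c₀ + p * c, ?_⟩
    rw [Nat.cast_add, Nat.cast_mul, ← sub_sub, hy, ← mul_sub, pow_succ']
    exact mul_dvd_mul_left _ hc

end WittVector

section PrimitiveRoot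

variable {R : Type*} [CommRing R] [IsDomain R] {p : ℕ} {ζ : R}

theorem one_sub_dvd_natCast_of_isPrimitiveRoot (hp : 1 < p) (hζ : IsPrimitiveRoot ζ p) :
    1 - ζ ∣ (p : R) := by
  have hsum : (p : R) = ∑ i ∈ range p, (1 - ζ ^ i) := by
    rw [sum_sub_distrib, hζ.geom_sum_eq_zero hp]
    simp
  rw [hsum]
  exact dvd_sum fun i _ => by simpa using sub_dvd_pow_sub_pow (1 : R) ζ i

theorem natCast_dvd_one_sub_pow {R : Type*} [CommRing R] {ζ : R} (hp : p.Prime)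
    (hζ : ζ ^ p = 1) : (p : R) ∣ (1 - ζ) ^ p := by
  obtain ⟨r, hr⟩ := exists_add_pow_prime_eq hp (1 - ζ) ζ
  rw [sub_add_cancel, one_pow, hζ] at hr
  exact ⟨-((1 - ζ) * ζ * r), by linear_combination -hr⟩

end PrimitiveRoot

theorem dvd_of_algebraMap_dvd {W R : Type*} [CommRing W] [IsDomain W] [IsIntegrallyClosed W]
    [CommRing R] [IsDomain R] [Algebra W R] [Algebra.IsIntegral W R] [FaithfulSMul W R] {a b : W}
    (h : algebraMap W R a ∣ algebraMap W R b) : a ∣ b := by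
  obtain ⟨y, hy⟩ := h
  rcases eq_or_ne a 0 with rfl | ha
  · rw [map_zero, zero_mul, FaithfulSMul.algebraMap_eq_zero_iff] at hy
    rw [hy]
  let := FractionRing.liftAlgebra W (FractionRing R)
  have hquot : algebraMap (FractionRing W) (FractionRing R)
      (algebraMap W (FractionRing W) b / algebraMap W (FractionRing W) a) =
        algebraMap R (FractionRing R) y := by
    rw [map_div₀, ← IsScalarTower.algebraMap_apply, ← IsScalarTower.algebraMap_apply,
      div_eq_iff (by simpa using ha), IsScalarTower.algebraMap_apply W R _ b,
      IsScalarTower.algebraMap_apply W R _ a, hy, map_mul, mul_comm]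
  have hint : IsIntegral W (algebraMap W (FractionRing W) b / algebraMap W (FractionRing W) a) := by
    rw [← isIntegral_algebraMap_iff (algebraMap (FractionRing W) (FractionRing R)).injective, hquot]
    exact (Algebra.IsIntegral.isIntegral y).algebraMap
  obtain ⟨c, hc⟩ := IsIntegrallyClosed.isIntegral_iff.mp hint
  refine ⟨c, IsFractionRing.injective W (FractionRing W) ?_⟩
  rw [map_mul, hc, mul_div_cancel₀ _ (by simpa using ha)]

universe u in
theorem exists_isIntegral_isPrimitiveRoot (W : Type u) [CommRing W] [IsDomain W]
    [CharZero W] (n : ℕ) [NeZero n] :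
    ∃ (R : Type u) (_ : CommRing R) (_ : IsDomain R) (_ : Algebra W R),
      Algebra.IsIntegral W R ∧ FaithfulSMul W R ∧ ∃ ζ : R, IsPrimitiveRoot ζ n := by
  let L := AlgebraicClosure (FractionRing W)
  have : CharZero L := charZero_of_injective_algebraMap (algebraMap (FractionRing W) L).injective
  have hinj : Function.Injective (algebraMap W L) :=
    (algebraMap (FractionRing W) L).injective.comp (IsFractionRing.injective W (FractionRing W))
  obtain ⟨ζ, hζ⟩ := HasEnoughRootsOfUnity.exists_primitiveRoot L n
  have hint : IsIntegral W ζ :=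
    IsIntegral.of_pow (NeZero.pos n) (hζ.pow_eq_one ▸ isIntegral_one)
  exact ⟨integralClosure W L, inferInstance, inferInstance, inferInstance, inferInstance,
    (faithfulSMul_iff_algebraMap_injective _ _).mpr fun _ _ h => hinj (congrArg Subtype.val h),
    ⟨ζ, hint⟩, hζ.of_map_of_injective (f := (integralClosure W L).val) Subtype.val_injective⟩

section Splitting

open WittVector (teichmuller)

variable {p : ℕ} [Fact p.Prime] {k : Type*} [Field k]

theorem sum_teichmuller_pow_pow {x : k} {s : ℕ} (hx : x ^ p ^ s = x) (v : ℕ) :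
    ∑ i ∈ range s, (teichmuller p x ^ p ^ i) ^ p ^ v = ∑ i ∈ range s, teichmuller p x ^ p ^ i := by
  induction v with
  | zero => simp
  | succ v ih =>
    have hper : teichmuller p x ^ p ^ s = teichmuller p x := by rw [← map_pow, hx]
    have hshift := (sum_range_succ' (fun i => (teichmuller p x ^ p ^ i) ^ p ^ v) s).symm.trans
      (sum_range_succ _ s)
    rw [hper, pow_zero, pow_one] at hshift
    rw [← ih, ← add_right_cancel hshift]
    refine sum_congr rfl fun i _ => ?_
    rw [← pow_mul, ← pow_mul]
    ring

/-- The multiplicative lift of the field `k` to an algebra over its Witt vectors. -/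
noncomputable def teichmullerLift (p : ℕ) [Fact p.Prime] (k : Type*) [Field k] (R : Type*)
    [CommRing R] [Algebra (WittVector p k) R] : k →*₀ R where
  toFun x := algebraMap (WittVector p k) R (teichmuller p x)
  map_zero' := by rw [WittVector.teichmuller_zero, map_zero]
  map_one' := by rw [map_one, map_one]
  map_mul' x y := by rw [map_mul, map_mul]

theorem teichmullerLift_injective {R : Type*} [CommRing R] [Algebra (WittVector p k) R]
    [FaithfulSMul (WittVector p k) R] : Function.Injective (teichmullerLift p k R) := by
  intro x y hxy
  simpa [WittVector.teichmuller_coeff_zero] using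
    congrArg (WittVector.coeff · 0) (FaithfulSMul.algebraMap_injective (WittVector p k) R hxy)

variable [CharP k p]

theorem frobenius_sum_teichmuller_pow {x : k} {s : ℕ} (hx : x ^ p ^ s = x) :
    WittVector.frobenius (∑ i ∈ range s, teichmuller p x ^ p ^ i) =
      ∑ i ∈ range s, teichmuller p x ^ p ^ i := by
  simpa only [map_sum, frobenius_teichmuller_pow, pow_one] using sum_teichmuller_pow_pow hx 1

variable [PerfectRing k p] {R : Type*} [CommRing R] [IsDomain R] [Algebra (WittVector p k) R]

theorem exists_natCast_approx_sum_teichmuller_pow {x : k} {s c : ℕ} (hx : x ^ p ^ s = x)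
    (hc : (c : k) = ∑ i ∈ range s, x ^ p ^ i) (K : ℕ) : ∃ c' : ℕ, c ≡ c' [MOD p] ∧
      (p : WittVector p k) ^ K ∣ ∑ i ∈ range s, teichmuller p x ^ p ^ i - c' := by
  obtain ⟨c', hc'⟩ :=
    exists_natCast_approx_of_frobenius_eq (frobenius_sum_teichmuller_pow hx) (K + 1)
  refine ⟨c', (CharP.natCast_eq_natCast k p).mp ?_, (pow_dvd_pow _ K.le_succ).trans hc'⟩
  have hmem := Ideal.mem_span_singleton.mpr ((dvd_pow_self _ K.succ_ne_zero).trans hc')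
  rw [← WittVector.ker_constantCoeff, RingHom.mem_ker, map_sub, map_natCast, sub_eq_zero,
    map_sum] at hmem
  rw [hc, ← hmem]
  refine sum_congr rfl fun i _ => ?_
  rw [map_pow]
  exact congrArg (· ^ p ^ i) (WittVector.teichmuller_coeff_zero p x).symm

variable [FaithfulSMul (WittVector p k) R]

theorem pow_dvd_of_one_sub_pow_dvd_intCast [Algebra.IsIntegral (WittVector p k) R] {ζ : R}
    (hζ : ζ ^ p = 1) {z : ℤ} {j : ℕ} (h : (1 - ζ) ^ (p * j) ∣ (z : R)) : (p : ℤ) ^ j ∣ z := by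
  refine pow_dvd_of_pow_dvd_intCast_wittVector (k := k) (dvd_of_algebraMap_dvd (R := R) ?_)
  rw [map_pow, map_natCast, map_intCast]
  refine .trans ?_ h
  rw [pow_mul]
  exact pow_dvd_pow_of_dvd (natCast_dvd_one_sub_pow Fact.out hζ) j

/- Dwork's splitting: `∑ i, x ^ p ^ i` lifts to a sum of Teichmüller representatives which is a
`p`-adic integer, hence is approximated by natural numbers congruent to `c`. -/
theorem pow_dvd_pow_sub_prod_splittingCoeff_teichmullerLift {ζ : R} (hζ : IsPrimitiveRoot ζ p)
    (M : ℕ) {x : k} {s c : ℕ} (hx : x ^ p ^ s = x) (hc : (c : k) = ∑ i ∈ range s, x ^ p ^ i) :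
    (1 - ζ) ^ M ∣ (ζ ^ (p - 1)) ^ c - ∏ i ∈ range s, ∑ n ∈ range M,
      splittingCoeff p M (1 - ζ) n * (teichmullerLift p k R x ^ p ^ i) ^ n := by
  have hp : p.Prime := Fact.out
  have hreg : IsLeftRegular (p : R) := by
    refine IsLeftCancelMulZero.mul_left_cancel_of_ne_zero ?_
    rw [← map_natCast (algebraMap (WittVector p k) R), Ne, FaithfulSMul.algebraMap_eq_zero_iff]
    exact WittVector.p_nonzero p k
  have hη : ζ ^ (p - 1) * (1 - (1 - ζ)) = 1 := by
    rw [sub_sub_cancel, ← pow_succ, Nat.sub_add_cancel hp.one_lt.le, hζ.pow_eq_one]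
  obtain ⟨c', hcc', hc'⟩ := exists_natCast_approx_sum_teichmuller_pow hx hc (M + M * M)
  have hηp : (ζ ^ (p - 1)) ^ p = 1 := by rw [pow_right_comm, hζ.pow_eq_one, one_pow]
  rw [pow_eq_pow_of_modEq hcc' hηp]
  refine pow_dvd_pow_sub_prod_splittingCoeff hp hreg
    (one_sub_dvd_natCast_of_isPrimitiveRoot hp.one_lt hζ) hη fun v => ?_
  have hlift := map_dvd (algebraMap (WittVector p k) R) hc'
  rw [← sum_teichmuller_pow_pow hx v] at hlift
  simpa [teichmullerLift] using hlift

end Splitting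

section DworkTrace

variable {σ R : Type*} [CommRing R]

/-- The product `H (x) H (x ^ q) ⋯ H (x ^ q ^ (m - 1))`. -/
noncomputable def frobeniusProd (q : ℕ) (H : MvPolynomial σ R) (m : ℕ) : MvPolynomial σ R :=
  ∏ j ∈ range m, MvPolynomial.expand (q ^ j) H

theorem frobeniusProd_succ (q : ℕ) (H : MvPolynomial σ R) (m : ℕ) :
    frobeniusProd q H (m + 1) = MvPolynomial.expand q (frobeniusProd q H m) * H := by
  simp only [frobeniusProd, prod_range_succ', map_prod, pow_zero, MvPolynomial.expand_one,
    AlgHom.id_apply]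
  congr 1
  refine prod_congr rfl fun j _ => ?_
  rw [pow_succ', MvPolynomial.expand_mul]

theorem add_le_pow_mul_of_mem_support_frobeniusProd {q D : ℕ} (hq : 2 ≤ q)
    {H : MvPolynomial σ R} {i : σ} (hD : ∀ d ∈ H.support, d i ≤ D) {m : ℕ} {d : σ →₀ ℕ}
    (hd : d ∈ (frobeniusProd q H m).support) : d i + D ≤ q ^ m * D := by
  classical
  induction m generalizing d with
  | zero =>
    have hd0 : d = 0 := by
      by_contra hne
      simp [frobeniusProd, MvPolynomial.mem_support_iff, MvPolynomial.coeff_one, Ne.symm hne] at hd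
    simp [hd0]
  | succ m ih =>
    rw [frobeniusProd_succ] at hd
    obtain ⟨d', hd', d₂, hd₂, rfl⟩ := mem_add.mp (MvPolynomial.support_mul _ _ hd)
    obtain ⟨d₁, hd₁, rfl⟩ := mem_image.mp (MvPolynomial.support_expand_subset _ hd')
    have h₁ := Nat.mul_le_mul_left q (ih hd₁)
    have h₂ := hD d₂ hd₂
    have hqD := Nat.mul_le_mul_right D hq
    simp only [Finsupp.add_apply, Finsupp.smul_apply, smul_eq_mul, pow_succ', mul_assoc]
    nlinarith

/- Since `H` has small degree, the monomials with exponents at most `b` span a subspace stable under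
Dwork's operator. -/
theorem le_of_coeff_mul_monomial_ne_zero {q : ℕ} (hq : 2 ≤ q) {H : MvPolynomial σ R} {b : σ →₀ ℕ}
    (hb : ∀ d ∈ H.support, ∀ i, b i ≠ 0 → d i ≤ b i) {t v w : σ →₀ ℕ} (hv : v ≤ b) {n : ℕ}
    (hw : w ≤ b) (htw : t ≤ n • w)
    (ht : (H * MvPolynomial.monomial v 1).coeff (q • t) ≠ 0) : t ≤ b := by
  classical
  rw [MvPolynomial.coeff_mul_monomial', mul_one, ite_ne_right_iff,
    ← MvPolynomial.mem_support_iff] at ht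
  intro i
  have hvi := hv i
  have hwi := hw i
  have htwi := htw i
  have hqt : v i ≤ q * t i := ht.1 i
  have hdi : b i ≠ 0 → q * t i - v i ≤ b i := hb _ ht.2 i
  rw [Finsupp.smul_apply, smul_eq_mul] at htwi
  rcases eq_or_ne (b i) 0 with h0 | h0
  · rw [show w i = 0 by omega, mul_zero] at htwi
    omega
  · have := hdi h0
    have := Nat.mul_le_mul_right (t i) hq
    omega

variable [DecidableEq σ]

theorem coeff_nsmul_expand_mul {q : ℕ} (hq : q ≠ 0) (w : σ →₀ ℕ) (A G : MvPolynomial σ R) :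
    MvPolynomial.coeff (q • w) (MvPolynomial.expand q A * G) =
      ∑ t ∈ Icc 0 w, MvPolynomial.coeff (w - t) A * MvPolynomial.coeff (q • t) G := by
  induction A using MvPolynomial.induction_on' with
  | monomial d a =>
    rw [MvPolynomial.expand_monomial, MvPolynomial.coeff_monomial_mul']
    have hcoeff : ∀ t ∈ Icc 0 w, t ≠ w - d → (MvPolynomial.monomial d a).coeff (w - t) = 0 :=
      fun t ht hne => by
        rw [MvPolynomial.coeff_monomial, if_neg]
        rintro rfl
        exact hne (tsub_tsub_cancel_of_le (mem_Icc.mp ht).2).symm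
    have hle : q • d ≤ q • w ↔ d ≤ w :=
      forall_congr' fun i => Nat.mul_le_mul_left_iff (Nat.pos_of_ne_zero hq)
    rw [sum_eq_single_of_mem (w - d) (by simp) fun t ht hne => by rw [hcoeff t ht hne, zero_mul],
      MvPolynomial.coeff_monomial]
    by_cases hdw : d ≤ w
    · rw [if_pos (hle.mpr hdw), if_pos (tsub_tsub_cancel_of_le hdw).symm]
      congr 2
      ext i
      simp [Nat.mul_sub]
    · rw [if_neg (mt hle.mp hdw), if_neg (fun h => hdw (h.trans_le tsub_le_self)), zero_mul]
  | add A B hA hB =>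
    rw [map_add, add_mul, MvPolynomial.coeff_add, hA, hB, ← sum_add_distrib]
    simp only [MvPolynomial.coeff_add, add_mul]

/-- The matrix, on the monomials with exponents at most `b`, of Dwork's operator: multiplication by
`H` followed by `x ^ (q • u) ↦ x ^ u`. -/
noncomputable def dworkMatrix (q : ℕ) (H : MvPolynomial σ R) (b : σ →₀ ℕ) :
    Matrix (Icc 0 b) (Icc 0 b) R :=
  Matrix.of fun u v => (H * MvPolynomial.monomial v.1 1).coeff (q • u.1)

theorem dworkMatrix_pow_apply {q : ℕ} (hq : 2 ≤ q) {H : MvPolynomial σ R} {b : σ →₀ ℕ}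
    (hb : ∀ d ∈ H.support, ∀ i, b i ≠ 0 → d i ≤ b i) (m : ℕ) (u v : Icc 0 b) :
    (dworkMatrix q H b ^ m) u v =
      (frobeniusProd q H m * MvPolynomial.monomial v.1 1).coeff (q ^ m • u.1) := by
  have hub := (mem_Icc.mp u.2).2
  have hvb := (mem_Icc.mp v.2).2
  induction m generalizing v with
  | zero =>
    rw [pow_zero, pow_zero, one_smul, frobeniusProd, prod_range_zero, one_mul,
      MvPolynomial.coeff_monomial, Matrix.one_apply]
    exact if_congr (by rw [eq_comm, Subtype.ext_iff]) rfl rfl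
  | succ m ih =>
    rw [frobeniusProd_succ, mul_assoc, pow_succ' q, mul_smul, coeff_nsmul_expand_mul (by omega),
      pow_succ, Matrix.mul_apply]
    let term (t : σ →₀ ℕ) : R := (frobeniusProd q H m).coeff (q ^ m • u.1 - t) *
      (H * MvPolynomial.monomial v.1 1).coeff (q • t)
    calc ∑ t, (dworkMatrix q H b ^ m) u t * dworkMatrix q H b t v
        = ∑ t : Icc 0 b, if t.1 ≤ q ^ m • u.1 then term t else 0 := by
          refine sum_congr rfl fun t _ => ?_
          rw [ih t (mem_Icc.mp t.2).2, MvPolynomial.coeff_mul_monomial', mul_one, ite_mul, zero_mul]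
          rfl
      _ = ∑ t ∈ Icc 0 b with t ≤ q ^ m • u.1, term t := by
          rw [sum_coe_sort (Icc 0 b) fun t => if t ≤ q ^ m • u.1 then term t else 0, sum_filter]
      _ = ∑ t ∈ Icc 0 (q ^ m • u.1), term t := by
          refine sum_subset (fun t ht => by simpa using (mem_filter.mp ht).2) fun t ht htb => ?_
          have htu := (mem_Icc.mp ht).2
          by_contra hne
          have htb' := le_of_coeff_mul_monomial_ne_zero hq hb hvb hub htu (right_ne_zero_of_mul hne)
          exact htb (mem_filter.mpr ⟨mem_Icc.mpr ⟨zero_le, htb'⟩, htu⟩)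

theorem trace_dworkMatrix_pow {q : ℕ} (hq : 2 ≤ q) {H : MvPolynomial σ R} {b : σ →₀ ℕ}
    (hb : ∀ d ∈ H.support, ∀ i, b i ≠ 0 → d i ≤ b i) (m : ℕ) :
    (dworkMatrix q H b ^ m).trace =
      ∑ u ∈ Icc 0 b, (frobeniusProd q H m).coeff ((q ^ m - 1) • u) := by
  rw [← sum_coe_sort]
  refine sum_congr rfl fun u _ => ?_
  have hsplit : q ^ m • u.1 = (q ^ m - 1) • u.1 + u.1 := by
    rw [← succ_nsmul, Nat.sub_add_cancel (Nat.one_le_pow _ _ (by omega))]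
  rw [Matrix.diag_apply, dworkMatrix_pow_apply hq hb, hsplit, MvPolynomial.coeff_mul_monomial,
    mul_one]

end DworkTrace

section Weight

variable {σ R : Type*} [CommRing R]

/-- The polynomials whose coefficient in degree `d` is divisible by `l ^ (d / c)`, with the exponent
rounded up. -/
def weightSubalgebra (σ : Type*) (l : R) (c : ℕ) : Subalgebra R (MvPolynomial σ R) where
  carrier := {f | ∀ d, l ^ (d.degree ⌈/⌉ c) ∣ f.coeff d}
  mul_mem' {f g} hf hg d := by
    classical
    rw [MvPolynomial.coeff_mul]
    refine dvd_sum fun x hx => ?_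
    rw [HasAntidiagonal.mem_antidiagonal] at hx
    refine (pow_dvd_pow l ?_).trans ((pow_add l _ _).symm ▸ mul_dvd_mul (hf x.1) (hg x.2))
    rw [← hx, map_add]
    rcases c.eq_zero_or_pos with rfl | hc
    · simp
    · rw [ceilDiv_le_iff_le_mul hc, mul_add]
      exact add_le_add (le_smul_ceilDiv hc) (le_smul_ceilDiv hc)
  add_mem' hf hg d := by
    rw [MvPolynomial.coeff_add]
    exact dvd_add (hf d) (hg d)
  algebraMap_mem' r d := by
    classical
    rw [MvPolynomial.algebraMap_eq, MvPolynomial.coeff_C]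
    split_ifs with hd
    · simp [← hd]
    · exact dvd_zero _

theorem monomial_mem_weightSubalgebra {l : R} {c n : ℕ} {d : σ →₀ ℕ} {a : R} (hd : d.degree ≤ c * n)
    (ha : l ^ n ∣ a) : MvPolynomial.monomial d a ∈ weightSubalgebra σ l c := by
  classical
  intro d'
  rw [MvPolynomial.coeff_monomial]
  split_ifs with h
  · subst h
    refine (pow_dvd_pow l ?_).trans ha
    rcases c.eq_zero_or_pos with rfl | hc
    · simp
    · rwa [ceilDiv_le_iff_le_mul hc]
  · exact dvd_zero _

/- Conjugation by the diagonal matrix with entries `l ^ w u`. -/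
theorem exists_pow_dvd_and_trace_pow_eq {ι : Type*} [Fintype ι] [DecidableEq ι] {l : R}
    (hl : IsLeftRegular l) {A : Matrix ι ι R} {w : ι → ℕ}
    (hA : ∀ u v, l ^ (2 * w u) ∣ A u v * l ^ w v) :
    ∃ B : Matrix ι ι R, (∀ u v, l ^ w u ∣ B u v) ∧ ∀ m, (A ^ m).trace = (B ^ m).trace := by
  choose B hB using hA
  let D : Matrix ι ι R := Matrix.diagonal fun u => l ^ w u
  let B' : Matrix ι ι R := Matrix.of fun u v => l ^ w u * B u v
  have hconj : SemiconjBy D B' A := by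
    ext u v
    simp only [D, B', Matrix.diagonal_mul, Matrix.mul_diagonal, hB, Matrix.of_apply, two_mul,
      pow_add, mul_assoc]
  refine ⟨B', fun u v => dvd_mul_right _ _, fun m => sum_congr rfl fun u _ => ?_⟩
  have hentry := congrFun (congrFun (hconj.pow_right m) u) u
  rw [Matrix.diagonal_mul, Matrix.mul_diagonal, mul_comm _ (l ^ w u)] at hentry
  exact (hl.pow (w u) hentry).symm

theorem card_filter_degree_div_lt_le [Fintype σ] (s : Finset (σ →₀ ℕ)) {c : ℕ} (hc : 0 < c)
    (C : ℕ) : #{u ∈ s | u.degree / c < C} ≤ (C * c) ^ Fintype.card σ := by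
  classical
  rw [← card_range (C * c), ← card_univ, ← prod_const, ← Fintype.card_piFinset]
  refine card_le_card_of_injOn (⇑) (fun u hu => ?_) DFunLike.coe_injective.injOn
  have hdeg := (Nat.div_lt_iff_lt_mul hc).mp (mem_filter.mp hu).2
  exact Fintype.mem_piFinset.mpr fun i => mem_range.mpr ((Finsupp.le_degree i u).trans_lt hdeg)

variable [DecidableEq σ] {l : R} {c : ℕ} {H : MvPolynomial σ R}

theorem pow_dvd_dworkMatrix_apply_mul (hH : H ∈ weightSubalgebra σ l c) {q : ℕ} (hq : 2 ≤ q)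
    {b : σ →₀ ℕ} (u v : Icc 0 b) : l ^ (2 * (u.1.degree / c)) ∣
      dworkMatrix q H b u v * l ^ (v.1.degree / c) := by
  rw [dworkMatrix, Matrix.of_apply, MvPolynomial.coeff_mul_monomial', mul_one]
  split_ifs with hvu
  · refine (pow_dvd_pow l ?_).trans ((pow_add l _ _).symm ▸ mul_dvd_mul_right (hH _) _)
    rcases c.eq_zero_or_pos with rfl | hc
    · simp
    have hdeg : q * u.1.degree ≤ c * ((q • u.1 - v.1).degree ⌈/⌉ c) + v.1.degree := by
      rw [← smul_eq_mul, ← map_nsmul, ← tsub_add_cancel_of_le hvu, map_add, add_tsub_cancel_right]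
      exact Nat.add_le_add_right (le_smul_ceilDiv hc) _
    have h2 := Nat.mul_le_mul_right u.1.degree hq
    have hu := Nat.mul_div_le u.1.degree c
    have hv := Nat.lt_mul_div_succ v.1.degree hc
    refine Nat.lt_succ_iff.mp (Nat.lt_of_mul_lt_mul_left (a := c) ?_)
    nlinarith
  · rw [zero_mul]
    exact dvd_zero _

theorem isOverconvergentQuotient_trace_dworkMatrix [Fintype σ] (hl : IsLeftRegular l) (hc : 0 < c)
    (hH : H ∈ weightSubalgebra σ l c) {q : ℕ} (hq : 2 ≤ q) (b : σ →₀ ℕ) (C : ℕ) (r : R) (d : ℕ) :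
    IsOverconvergentQuotient l C ((d + 1) * ((C * c) ^ Fintype.card σ + 1))
      (PowerSeries.mk fun m =>
        if m = 0 then 0 else (r ^ m - 1) ^ d * (dworkMatrix q H b ^ m).trace) := by
  obtain ⟨B, hB, htrace⟩ :=
    exists_pow_dvd_and_trace_pow_eq hl (pow_dvd_dworkMatrix_apply_mul hH hq (b := b))
  simp only [htrace]
  refine isOverconvergentQuotient_pow_sub_one_mul_trace (s := {u | u.1.degree / c < C}) ?_
    (fun u hu v => (pow_dvd_pow l ?_).trans (hB u v)) r d
  · refine le_trans ?_ (card_filter_degree_div_lt_le (Icc 0 b) hc C)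
    rw [← card_map (Function.Embedding.subtype _)]
    refine card_le_card fun u hu => ?_
    obtain ⟨v, hv, rfl⟩ := mem_map.mp hu
    exact mem_filter.mpr ⟨v.2, by simpa using hv⟩
  · simpa using hu

end Weight

section FiniteField

variable {F R : Type*} [CommRing R]

/-- The additive character `x ↦ ζ ^ Tr x` of a finite field of characteristic `p`. -/
noncomputable def traceChar (p : ℕ) [NeZero p] (F : Type*) [CommRing F] [Algebra (ZMod p) F] {ζ : R}
    (hζ : ζ ^ p = 1) : AddChar F R :=
  (AddChar.zmodChar p hζ).compAddMonoidHom (Algebra.trace (ZMod p) F).toAddMonoidHom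

theorem traceChar_apply {p : ℕ} [NeZero p] [CommRing F] [Algebra (ZMod p) F] {ζ : R}
    (hζ : ζ ^ p = 1) (x : F) :
    traceChar p F hζ x = ζ ^ (Algebra.trace (ZMod p) F x).val :=
  AddChar.zmodChar_apply hζ _

theorem isPrimitive_traceChar {p : ℕ} [Fact p.Prime] [Field F] [Finite F] [Algebra (ZMod p) F]
    {ζ : R} (hζ : IsPrimitiveRoot ζ p) : (traceChar p F hζ.pow_eq_one).IsPrimitive := by
  have : Fact (1 < p) := ⟨(Fact.out : p.Prime).one_lt⟩
  refine AddChar.IsPrimitive.of_ne_one fun h => ?_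
  obtain ⟨x, hx⟩ := Algebra.trace_surjective (ZMod p) F 1
  have hζ1 : traceChar p F hζ.pow_eq_one x = 1 := by rw [h, AddChar.one_apply]
  rw [traceChar_apply, hx, ZMod.val_one] at hζ1
  exact hζ.pow_ne_one_of_pos_of_lt one_ne_zero (Fact.out : 1 < p) hζ1

theorem addChar_sum_eq_prod {A M ι : Type*} [AddCommMonoid A] [CommMonoid M] (ψ : AddChar A M)
    (f : ι → A) (s : Finset ι) : ψ (∑ i ∈ s, f i) = ∏ i ∈ s, ψ (f i) :=
  map_prod ψ.toMonoidHom (fun i => Multiplicative.ofAdd (f i)) s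

theorem sum_sum_addChar_sum_mul [IsDomain R] [CommRing F] [Fintype F] [DecidableEq F]
    {ψ : AddChar F R} (hψ : ψ.IsPrimitive) {X κ : Type*} [Fintype X] [Fintype κ] [DecidableEq κ]
    (v : X → κ → F) :
    ∑ x, ∑ y : κ → F, ψ (∑ j, y j * v x j) =
      Fintype.card F ^ Fintype.card κ * #{x | ∀ j, v x j = 0} := by
  have hsum (x : X) : ∑ y : κ → F, ψ (∑ j, y j * v x j) =
      if ∀ j, v x j = 0 then (Fintype.card F : R) ^ Fintype.card κ else 0 := by
    calc ∑ y : κ → F, ψ (∑ j, y j * v x j)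
        = ∑ y : κ → F, ∏ j, ψ (y j * v x j) :=
          sum_congr rfl fun y _ => addChar_sum_eq_prod ψ _ univ
      _ = ∏ j, ∑ a, ψ (a * v x j) := by
          rw [prod_univ_sum (fun _ => univ) fun j a => ψ (a * v x j), Fintype.piFinset_univ]
      _ = ∏ j, if v x j = 0 then (Fintype.card F : R) else 0 :=
          prod_congr rfl fun j _ => by rw [AddChar.sum_mulShift _ hψ, Nat.cast_ite, Nat.cast_zero]
      _ = if ∀ j, v x j = 0 then (Fintype.card F : R) ^ Fintype.card κ else 0 := by
          simp [prod_ite_zero]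
  rw [sum_congr rfl fun x _ => hsum x, ← sum_filter, sum_const, nsmul_eq_mul, mul_comm]

theorem mem_Icc_indicator_const {σ : Type*} [DecidableEq σ] {S : Finset σ} {D : ℕ} {u : σ →₀ ℕ} :
    u ∈ Icc 0 (Finsupp.indicator S fun _ _ => D) ↔ (∀ i, u i ≤ D) ∧ u.support ⊆ S := by
  rw [mem_Icc, and_iff_right zero_le, Finsupp.le_def, Finset.subset_iff, ← forall_and]
  refine forall_congr' fun i => ?_
  by_cases hi : i ∈ S <;> simp +contextual [Finsupp.indicator_apply, hi]

theorem sum_filter_coeff_eq_sum_Icc {σ : Type*} [Fintype σ] [DecidableEq σ]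
    {G : MvPolynomial σ R} {n D : ℕ} (hn : n ≠ 0) (hG : ∀ d ∈ G.support, ∀ i, d i ≤ n * D)
    (S : Finset σ) :
    ∑ d ∈ G.support with (∀ i, n ∣ d i) ∧ d.support ⊆ S, G.coeff d =
      ∑ u ∈ Icc 0 (Finsupp.indicator S fun _ _ => D), G.coeff (n • u) := by
  have hinj : Function.Injective fun u : σ →₀ ℕ => n • u := fun u v h => by
    ext i
    simpa [hn] using DFunLike.congr_fun h i
  rw [← sum_image (f := G.coeff) hinj.injOn]
  refine sum_subset (fun d hd => ?_) fun d hd hd' => ?_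
  · obtain ⟨hdG, hdvd, hdS⟩ := mem_filter.mp hd
    choose u hu using hdvd
    obtain rfl : d = n • Finsupp.equivFunOnFinite.symm u := Finsupp.ext hu
    refine mem_image_of_mem _ (mem_Icc_indicator_const.mpr ⟨fun i => ?_, fun i hi => hdS ?_⟩)
    · exact Nat.le_of_mul_le_mul_left (hG _ hdG i) (Nat.pos_of_ne_zero hn)
    · simpa [hn] using hi
  · obtain ⟨u, hu, rfl⟩ := mem_image.mp hd
    by_contra hne
    exact hd' (mem_filter.mpr ⟨MvPolynomial.mem_support_iff.mpr hne, fun i => dvd_mul_right _ _,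
      Finsupp.support_smul.trans (mem_Icc_indicator_const.mp hu).2⟩)

variable [IsDomain R] [Field F] [Fintype F] {τ : F →*₀ R}

theorem sum_pow_of_injective (hτ : Function.Injective τ) (v : ℕ) :
    ∑ x, τ x ^ v = (if Fintype.card F - 1 ∣ v then (Fintype.card F : R) - 1 else 0) +
      if v = 0 then 1 else 0 := by
  classical
  let χ : Fˣ →* R := (powMonoidHom v).comp ((τ : F →* R).comp (Units.coeHom F))
  have hχ : χ = 1 ↔ Fintype.card F - 1 ∣ v := by
    rw [← FiniteField.forall_pow_eq_one_iff, MonoidHom.ext_iff]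
    refine forall_congr' fun x => ?_
    rw [Units.ext_iff, ← hτ.eq_iff]
    simp [χ]
  have hunits : ∑ x : Fˣ, χ x = if Fintype.card F - 1 ∣ v then (Fintype.card F : R) - 1 else 0 := by
    split_ifs with hv
    · simp [hχ.mpr hv, Fintype.card_units, Nat.cast_sub Fintype.card_pos]
    · exact sum_hom_units_eq_zero χ (mt hχ.mp hv)
  rw [← hunits, Fintype.sum_eq_add_sum_subtype_ne _ (0 : F), map_zero, zero_pow_eq, add_comm,
    ← unitsEquivNeZero.sum_comp]
  rfl

variable {σ : Type*} [Fintype σ] [DecidableEq σ]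

theorem sum_prod_pow_of_injective (hτ : Function.Injective τ) (d : σ →₀ ℕ) :
    ∑ w : σ → F, ∏ i, τ (w i) ^ d i = ∑ S : Finset σ,
      if (∀ i, Fintype.card F - 1 ∣ d i) ∧ d.support ⊆ S then ((Fintype.card F : R) - 1) ^ #S
      else 0 := by
  have hpow := prod_univ_sum (fun _ => univ) fun i (x : F) => τ x ^ d i
  rw [Fintype.piFinset_univ] at hpow
  simp only [← hpow, sum_pow_of_injective hτ, prod_add, prod_ite_zero, powerset_univ, prod_const]
  refine sum_congr rfl fun S _ => ?_
  rw [one_pow, ite_zero_mul_ite_zero, mul_one]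
  refine if_congr ?_ rfl rfl
  have hS : d.support ⊆ S ↔ ∀ i ∈ univ \ S, d i = 0 := by
    simp [Finset.subset_iff, not_imp_comm]
  rw [hS]
  refine and_congr_left fun h => ⟨fun hdvd i => ?_, fun hdvd i _ => hdvd i⟩
  by_cases hi : i ∈ S
  · exact hdvd i hi
  · rw [h i (by simpa using hi)]
    exact dvd_zero _

theorem sum_eval_of_injective (hτ : Function.Injective τ) {G : MvPolynomial σ R} {D : ℕ}
    (hG : ∀ d ∈ G.support, ∀ i, d i ≤ (Fintype.card F - 1) * D) :
    ∑ w : σ → F, MvPolynomial.eval (τ ∘ w) G = ∑ S : Finset σ,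
      ((Fintype.card F : R) - 1) ^ #S * ∑ u ∈ Icc 0 (Finsupp.indicator S fun _ _ => D),
        G.coeff ((Fintype.card F - 1) • u) := by
  have hF : Fintype.card F - 1 ≠ 0 := by
    have := Fintype.one_lt_card (α := F)
    omega
  calc ∑ w : σ → F, MvPolynomial.eval (τ ∘ w) G
      = ∑ d ∈ G.support, G.coeff d * ∑ w : σ → F, ∏ i, τ (w i) ^ d i := by
        simp only [MvPolynomial.eval_eq', Function.comp_apply, mul_sum]
        exact sum_comm
    _ = ∑ S : Finset σ, ∑ d ∈ G.support with (∀ i, Fintype.card F - 1 ∣ d i) ∧ d.support ⊆ S,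
          ((Fintype.card F : R) - 1) ^ #S * G.coeff d := by
        simp only [sum_prod_pow_of_injective hτ, mul_sum, mul_ite, mul_zero, sum_filter]
        rw [sum_comm]
        simp only [mul_comm]
    _ = _ := by
        simp only [← mul_sum, sum_filter_coeff_eq_sum_Icc hF hG]

end FiniteField

section SplittingPolynomial

theorem prod_range_mul_eq_prod_prod {M : Type*} [CommMonoid M] (f : ℕ → M) (e m : ℕ) :
    ∏ s ∈ range (e * m), f s = ∏ j ∈ range m, ∏ i ∈ range e, f (i + e * j) := by
  induction m with
  | zero => simp
  | succ m ih =>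
    rw [mul_add_one, prod_range_add, prod_range_succ, ih]
    simp only [add_comm]

theorem dvd_prod_sub_prod {ι R : Type*} [CommRing R] {s : Finset ι} {f g : ι → R} {a : R}
    (h : ∀ i ∈ s, a ∣ f i - g i) : a ∣ ∏ i ∈ s, f i - ∏ i ∈ s, g i := by
  simp only [← Ideal.mem_span_singleton, ← Ideal.Quotient.eq, map_prod] at h ⊢
  exact prod_congr rfl h

variable {σ k R : Type*} [Field k] [CommRing R]

/-- The polynomial `∏ d, ∏ i < e, ∑ n < M, θ n * (τ (g d) * x ^ d) ^ (p ^ i * n)`, where the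
`θ n` are splitting coefficients and `τ` is a multiplicative lift. At the lift of a point `w` over
the field with `p ^ e` elements, its value approximates an additive character at `g w`. -/
noncomputable def splittingPolynomial (p M e : ℕ) (l : R) (τ : k →*₀ R) (g : MvPolynomial σ k) :
    MvPolynomial σ R :=
  ∏ d ∈ g.support, ∏ i ∈ range e, ∑ n ∈ range M,
    MvPolynomial.monomial ((p ^ i * n) • d) (splittingCoeff p M l n * τ (g.coeff d) ^ (p ^ i * n))

theorem splittingPolynomial_mem_weightSubalgebra {p M e c : ℕ} (hp : 0 < p) {l : R} {τ : k →*₀ R}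
    {g : MvPolynomial σ k} (hc : ∀ d ∈ g.support, p ^ e * d.degree ≤ c) :
    splittingPolynomial p M e l τ g ∈ weightSubalgebra σ l c := by
  refine prod_mem fun d hd => prod_mem fun i hi => sum_mem fun n _ =>
    monomial_mem_weightSubalgebra ?_ ((pow_dvd_splittingCoeff l n).mul_right _)
  rw [map_nsmul, smul_eq_mul, mul_right_comm]
  refine Nat.mul_le_mul_right n (.trans ?_ (hc d hd))
  exact Nat.mul_le_mul_right _ (Nat.pow_le_pow_right hp (mem_range.mp hi).le)

theorem eval_frobeniusProd (q : ℕ) (H : MvPolynomial σ R) (m : ℕ) (x : σ → R) :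
    MvPolynomial.eval x (frobeniusProd q H m) =
      ∏ j ∈ range m, MvPolynomial.eval (x ^ q ^ j) H := by
  simp only [frobeniusProd, map_prod, MvPolynomial.eval_expand]

variable [Fintype σ]

theorem eval_frobeniusProd_splittingPolynomial {p M e m : ℕ} {l : R} {τ : k →*₀ R}
    {g : MvPolynomial σ k} (hg : ∀ d, g.coeff d ^ p ^ e = g.coeff d) (w : σ → k) :
    MvPolynomial.eval (τ ∘ w) (frobeniusProd (p ^ e) (splittingPolynomial p M e l τ g) m) =
      ∏ d ∈ g.support, ∏ i ∈ range (e * m), ∑ n ∈ range M,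
        splittingCoeff p M l n * (τ (g.coeff d * ∏ i, w i ^ d i) ^ p ^ i) ^ n := by
  have hg' (d : σ →₀ ℕ) (j : ℕ) : g.coeff d ^ (p ^ e) ^ j = g.coeff d := by
    induction j with
    | zero => rw [pow_zero, pow_one]
    | succ j ih => rw [pow_succ, pow_mul, ih, hg]
  rw [eval_frobeniusProd]
  simp only [prod_range_mul_eq_prod_prod _ e m, splittingPolynomial, map_prod, map_sum,
    MvPolynomial.eval_monomial]
  rw [prod_comm]
  refine prod_congr rfl fun d _ => prod_congr rfl fun j _ => prod_congr rfl fun i _ =>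
    sum_congr rfl fun n _ => ?_
  have hlift : τ (g.coeff d * ∏ i, w i ^ d i) ^ (p ^ e) ^ j =
      τ (g.coeff d) * ∏ i, (τ (w i) ^ (p ^ e) ^ j) ^ d i := by
    simp only [← map_pow, mul_pow, hg', map_mul, ← prod_pow, map_prod, pow_right_comm]
  rw [add_comm i, pow_add, pow_mul p e, pow_mul _ _ (p ^ i), hlift, ← pow_mul _ (p ^ i),
    mul_pow, ← prod_pow, mul_assoc, Finsupp.prod_fintype _ _ fun _ => pow_zero _]
  congr 2
  refine prod_congr rfl fun a _ => ?_
  rw [Finsupp.smul_apply, smul_eq_mul, ← pow_mul _ (d a), mul_comm (d a)]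
  rfl

end SplittingPolynomial

section CharacterSum

variable {p : ℕ} [Fact p.Prime] {F k R : Type*} [Field F] [Fintype F] [Algebra (ZMod p) F]
  [Field k] [CharP k p] [PerfectRing k p] [Algebra F k] [CommRing R] [IsDomain R]
  [Algebra (WittVector p k) R] [FaithfulSMul (WittVector p k) R]

theorem natCast_val_trace_eq_sum_pow {s : ℕ} (hF : Fintype.card F = p ^ s) (x : F) :
    ((Algebra.trace (ZMod p) F x).val : F) = ∑ i ∈ range s, x ^ p ^ i := by
  have hs : Module.finrank (ZMod p) F = s := by
    refine Nat.pow_right_injective (Fact.out : p.Prime).two_le ?_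
    dsimp only
    rw [← hF, Module.card_eq_pow_finrank (K := ZMod p), ZMod.card]
  rw [← map_natCast (algebraMap (ZMod p) F), ZMod.natCast_zmod_val,
    FiniteField.algebraMap_trace_eq_sum_pow, hs, Nat.card_zmod]

theorem pow_dvd_traceChar_sub_prod_splittingCoeff {s : ℕ} (hF : Fintype.card F = p ^ s) {ζ : R}
    (hζ : IsPrimitiveRoot ζ p) (hη : (ζ ^ (p - 1)) ^ p = 1) (M : ℕ) (x : F) :
    (1 - ζ) ^ M ∣ traceChar p F hη x - ∏ i ∈ range s, ∑ n ∈ range M,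
      splittingCoeff p M (1 - ζ) n * (teichmullerLift p k R (algebraMap F k x) ^ p ^ i) ^ n := by
  rw [traceChar_apply]
  refine pow_dvd_pow_sub_prod_splittingCoeff_teichmullerLift hζ M ?_ ?_
  · rw [← map_pow, ← hF, FiniteField.pow_card]
  · rw [← map_natCast (algebraMap F k), natCast_val_trace_eq_sum_pow hF, map_sum]
    simp only [map_pow]

theorem pow_dvd_traceChar_eval_sub_eval_frobeniusProd {σ : Type*} [Finite σ] {e m : ℕ}
    (hF : Fintype.card F = p ^ (e * m)) {ζ : R} (hζ : IsPrimitiveRoot ζ p)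
    (hη : (ζ ^ (p - 1)) ^ p = 1) (M : ℕ) {g : MvPolynomial σ F}
    (hg : ∀ d, g.coeff d ^ p ^ e = g.coeff d) (w : σ → F) :
    (1 - ζ) ^ M ∣ traceChar p F hη (MvPolynomial.eval w g) -
      MvPolynomial.eval (teichmullerLift p k R ∘ algebraMap F k ∘ w)
        (frobeniusProd (p ^ e) (splittingPolynomial p M e (1 - ζ) (teichmullerLift p k R)
          (g.map (algebraMap F k))) m) := by
  cases nonempty_fintype σ
  have hcoeff (d : σ →₀ ℕ) : (g.map (algebraMap F k)).coeff d ^ p ^ e =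
      (g.map (algebraMap F k)).coeff d := by
    rw [MvPolynomial.coeff_map, ← map_pow, hg]
  rw [eval_frobeniusProd_splittingPolynomial hcoeff,
    MvPolynomial.support_map_of_injective _ (algebraMap F k).injective, MvPolynomial.eval_eq',
    addChar_sum_eq_prod]
  refine dvd_prod_sub_prod fun d _ => ?_
  simpa [MvPolynomial.coeff_map] using pow_dvd_traceChar_sub_prod_splittingCoeff (k := k) hF hζ hη M
    (g.coeff d * ∏ i, w i ^ d i)

end CharacterSum

section DworkTraceSeries

variable {σ R : Type*} [Fintype σ] [DecidableEq σ] [CommRing R]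

/-- The generating series of the trace expressions `∑ S, (q ^ m - 1) ^ #S * Tr (A S ^ m)`, where
`A S` is Dwork's operator on the monomials in the variables of `S`. -/
noncomputable def dworkTraceSeries (q : ℕ) (H : MvPolynomial σ R) : R⟦X⟧ :=
  ∑ S : Finset σ, PowerSeries.mk fun m => if m = 0 then 0 else
    ((q : R) ^ m - 1) ^ #S *
      (dworkMatrix q H (Finsupp.indicator S fun _ _ => H.totalDegree) ^ m).trace

theorem isOverconvergentQuotient_dworkTraceSeries {l : R} (hl : IsLeftRegular l) {c : ℕ}
    (hc : 0 < c) {H : MvPolynomial σ R} (hH : H ∈ weightSubalgebra σ l c) {q : ℕ} (hq : 2 ≤ q)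
    (C : ℕ) :
    IsOverconvergentQuotient l C
      (∑ S : Finset σ, (#S + 1) * ((C * c) ^ Fintype.card σ + 1)) (dworkTraceSeries q H) :=
  .sum fun _ _ => isOverconvergentQuotient_trace_dworkMatrix hl hc hH hq _ C _ _

theorem coeff_dworkTraceSeries {m : ℕ} (hm : m ≠ 0) (q : ℕ) (H : MvPolynomial σ R) :
    coeff m (dworkTraceSeries q H) = ∑ S : Finset σ, ((q : R) ^ m - 1) ^ #S *
      (dworkMatrix q H (Finsupp.indicator S fun _ _ => H.totalDegree) ^ m).trace := by
  simp only [dworkTraceSeries, map_sum, coeff_mk, if_neg hm]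

theorem coeff_zero_dworkTraceSeries (q : ℕ) (H : MvPolynomial σ R) :
    coeff 0 (dworkTraceSeries q H) = 0 := by
  simp only [dworkTraceSeries, map_sum, coeff_mk, if_true, sum_const_zero]

theorem sum_eval_frobeniusProd_eq_coeff_dworkTraceSeries [IsDomain R] {F : Type*} [Field F]
    [Fintype F] {τ : F →*₀ R} (hτ : Function.Injective τ) {q m : ℕ} (hq : 2 ≤ q) (hm : m ≠ 0)
    (hF : Fintype.card F = q ^ m) (H : MvPolynomial σ R) :
    ∑ w : σ → F, MvPolynomial.eval (τ ∘ w) (frobeniusProd q H m) =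
      coeff m (dworkTraceSeries q H) := by
  have hdeg (i : σ) : ∀ d ∈ H.support, d i ≤ H.totalDegree := fun d hd =>
    (Finsupp.le_degree i d).trans (MvPolynomial.le_totalDegree hd)
  have hdegm : ∀ d ∈ (frobeniusProd q H m).support, ∀ i,
      d i ≤ (Fintype.card F - 1) * H.totalDegree := fun d hd i => by
    rw [hF, Nat.sub_one_mul]
    exact Nat.le_sub_of_add_le (add_le_pow_mul_of_mem_support_frobeniusProd hq (hdeg i) hd)
  rw [coeff_dworkTraceSeries hm, sum_eval_of_injective hτ hdegm]
  refine sum_congr rfl fun S _ => ?_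
  rw [trace_dworkMatrix_pow hq, hF, Nat.cast_pow]
  intro d hd i hi
  have hiS : i ∈ S := by
    by_contra hiS
    simp [Finsupp.indicator_apply, hiS] at hi
  simpa [Finsupp.indicator_apply, hiS] using hdeg i d hd

end DworkTraceSeries

section SumXMul

variable {ι κ : Type*} [Fintype κ]

/-- The polynomial `∑ j, y j * f j`, with a new variable `y j` for each `j`. Summing an additive
character of its values over the `y j` detects the common zeros of the `f j`. -/
noncomputable def sumXMul {R : Type*} [CommSemiring R] (f : κ → MvPolynomial ι R) :
    MvPolynomial (ι ⊕ κ) R :=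
  ∑ j, MvPolynomial.X (Sum.inr j) * MvPolynomial.rename Sum.inl (f j)

theorem eval_sumXMul {R : Type*} [CommSemiring R] (f : κ → MvPolynomial ι R) (x : ι → R)
    (y : κ → R) :
    MvPolynomial.eval (Sum.elim x y) (sumXMul f) = ∑ j, y j * MvPolynomial.eval x (f j) := by
  simp [sumXMul, MvPolynomial.eval_rename]

theorem map_sumXMul {R S : Type*} [CommSemiring R] [CommSemiring S] (φ : R →+* S)
    (f : κ → MvPolynomial ι R) : (sumXMul f).map φ = sumXMul fun j => (f j).map φ := by
  simp [sumXMul, MvPolynomial.map_rename]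

theorem coeff_sumXMul_pow {p : ℕ} [Fact p.Prime] {R : Type*} [CommRing R] [CharP R p] {e : ℕ}
    {f : κ → MvPolynomial ι R} (hf : ∀ j d, (f j).coeff d ^ p ^ e = (f j).coeff d)
    (d : ι ⊕ κ →₀ ℕ) : (sumXMul f).coeff d ^ p ^ e = (sumXMul f).coeff d := by
  have hmap (j : κ) : (f j).map (iterateFrobenius R p e) = f j :=
    MvPolynomial.ext _ _ fun d => by rw [MvPolynomial.coeff_map, iterateFrobenius_def, hf]
  conv_rhs => rw [← funext hmap, ← map_sumXMul, MvPolynomial.coeff_map, iterateFrobenius_def]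

end SumXMul

section CharacterSum

variable {p : ℕ} [Fact p.Prime] {F k R : Type*} [Field F] [Fintype F] [Algebra (ZMod p) F]
  [Field k] [CharP k p] [PerfectRing k p] [Algebra F k] [CommRing R] [IsDomain R]
  [Algebra (WittVector p k) R] [FaithfulSMul (WittVector p k) R] {e m : ℕ}

theorem pow_dvd_sum_traceChar_eval_sub_coeff_dworkTraceSeries {σ : Type*} [Fintype σ]
    [DecidableEq σ] (he : e ≠ 0) (hm : m ≠ 0) (hF : Fintype.card F = (p ^ e) ^ m) {ζ : R}
    (hζ : IsPrimitiveRoot ζ p) (hη : (ζ ^ (p - 1)) ^ p = 1) (M : ℕ) {g : MvPolynomial σ F}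
    (hg : ∀ d, g.coeff d ^ p ^ e = g.coeff d) :
    (1 - ζ) ^ M ∣ ∑ w : σ → F, traceChar p F hη (MvPolynomial.eval w g) -
      coeff m (dworkTraceSeries (p ^ e)
        (splittingPolynomial p M e (1 - ζ) (teichmullerLift p k R) (g.map (algebraMap F k)))) := by
  have hτ : Function.Injective
      ((teichmullerLift p k R).comp (algebraMap F k).toMonoidWithZeroHom) :=
    teichmullerLift_injective.comp (algebraMap F k).injective
  rw [← sum_eval_frobeniusProd_eq_coeff_dworkTraceSeries hτ
    ((Fact.out : p.Prime).two_le.trans (Nat.le_self_pow he p)) hm hF, ← sum_sub_distrib]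
  rw [← pow_mul] at hF
  exact dvd_sum fun w _ => pow_dvd_traceChar_eval_sub_eval_frobeniusProd hF hζ hη M hg w

theorem pow_dvd_card_pow_mul_card_sub_coeff_dworkTraceSeries {ι κ : Type*} [Fintype ι]
    [DecidableEq ι] [Fintype κ] [DecidableEq κ] [DecidableEq F] (he : e ≠ 0) (hm : m ≠ 0)
    (hF : Fintype.card F = (p ^ e) ^ m) {ζ : R} (hζ : IsPrimitiveRoot ζ p) (M : ℕ)
    {f : κ → MvPolynomial ι F} (hf : ∀ j d, (f j).coeff d ^ p ^ e = (f j).coeff d) :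
    (1 - ζ) ^ M ∣
      (Fintype.card F : R) ^ Fintype.card κ * #{x : ι → F | ∀ j, MvPolynomial.eval x (f j) = 0} -
      coeff m (dworkTraceSeries (p ^ e) (splittingPolynomial p M e (1 - ζ) (teichmullerLift p k R)
        ((sumXMul f).map (algebraMap F k)))) := by
  have hp : p.Prime := Fact.out
  have hη : IsPrimitiveRoot (ζ ^ (p - 1)) p :=
    hζ.pow_of_coprime _ ((Nat.coprime_self_sub_left hp.one_lt.le).mpr (Nat.coprime_one_left p))
  have : CharP F p := charP_of_injective_algebraMap (algebraMap (ZMod p) F).injective p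
  have hsum : (Fintype.card F : R) ^ Fintype.card κ *
      #{x : ι → F | ∀ j, MvPolynomial.eval x (f j) = 0} =
        ∑ w, traceChar p F hη.pow_eq_one (MvPolynomial.eval w (sumXMul f)) := by
    rw [← sum_sum_addChar_sum_mul (isPrimitive_traceChar hη), ← Fintype.sum_prod_type',
      ← (Equiv.sumArrowEquivProdArrow ι κ F).symm.sum_comp]
    simp only [← eval_sumXMul]
    rfl
  rw [hsum]
  exact pow_dvd_sum_traceChar_eval_sub_coeff_dworkTraceSeries he hm hF hζ hη.pow_eq_one M
    (coeff_sumXMul_pow hf)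

end CharacterSum

section FixedSubfield

variable {k : Type*} [Field k] {ι κ : Type*}

/-- The number of common zeros of the `f j` whose coordinates are fixed by `x ↦ x ^ q`. -/
noncomputable def fixedZeroCard (f : κ → MvPolynomial ι k) (q : ℕ) : ℕ :=
  Nat.card {x : ι → k // (∀ j, MvPolynomial.eval x (f j) = 0) ∧ ∀ i, x i ^ q = x i}

/-- The subfield of elements fixed by `x ↦ x ^ p ^ s`. -/
def frobeniusFixed (p : ℕ) [Fact p.Prime] (k : Type*) [Field k] [CharP k p] (s : ℕ) : Subfield k :=
  (iterateFrobenius k p s).eqLocusField (RingHom.id k)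

variable {p : ℕ} [Fact p.Prime] [CharP k p]

theorem mem_frobeniusFixed {s : ℕ} {x : k} : x ∈ frobeniusFixed p k s ↔ x ^ p ^ s = x :=
  Iff.rfl

theorem natCard_frobeniusFixed [IsAlgClosed k] {s : ℕ} (hs : s ≠ 0) :
    Nat.card (frobeniusFixed p k s) = p ^ s := by
  have hp : 1 < p := (Fact.out : p.Prime).one_lt
  have hsep := galois_poly_separable (K := k) p (p ^ s) (dvd_pow_self p hs)
  rw [← FiniteField.X_pow_card_pow_sub_X_natDegree_eq k hs hp,
    ← Polynomial.card_rootSet_eq_natDegree (K := k) hsep (IsAlgClosed.splits _),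
    ← Nat.card_eq_fintype_card]
  refine Nat.card_congr (Equiv.subtypeEquivRight fun x => ?_)
  rw [mem_frobeniusFixed, Polynomial.mem_rootSet_of_ne hsep.ne_zero]
  simp [sub_eq_zero]

theorem exists_map_frobeniusFixed_eq {s : ℕ} {f : MvPolynomial ι k}
    (hf : ∀ d, f.coeff d ^ p ^ s = f.coeff d) :
    ∃ g : MvPolynomial ι (frobeniusFixed p k s), g.map (algebraMap _ k) = f := by
  refine MvPolynomial.mem_range_map_iff_coeffs_subset.mpr ?_
  intro c hc
  obtain ⟨d, -, rfl⟩ := MvPolynomial.mem_coeffs_iff.mp hc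
  exact ⟨⟨_, mem_frobeniusFixed.mpr (hf d)⟩, rfl⟩

theorem fixedZeroCard_map_eq {s : ℕ} (g : κ → MvPolynomial ι (frobeniusFixed p k s)) :
    fixedZeroCard (fun j => (g j).map (algebraMap _ k)) (p ^ s) =
      Nat.card {x : ι → frobeniusFixed p k s // ∀ j, MvPolynomial.eval x (g j) = 0} := by
  have heval (x : ι → frobeniusFixed p k s) (j : κ) :
      MvPolynomial.eval (fun i => (x i : k)) ((g j).map (algebraMap _ k)) = 0 ↔
        MvPolynomial.eval x (g j) = 0 := by
    rw [← map_eq_zero (algebraMap (frobeniusFixed p k s) k), MvPolynomial.map_eval]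
    rfl
  exact Nat.card_congr
    { toFun x := ⟨fun i => ⟨x.1 i, x.2.2 i⟩, fun j => (heval _ j).mp (x.2.1 j)⟩
      invFun x := ⟨fun i => x.1 i, fun j => (heval _ j).mpr (x.2 j), fun i => (x.1 i).2⟩ }

theorem fixedZeroCard_le [IsAlgClosed k] [Fintype ι] {s : ℕ} (hs : s ≠ 0)
    (f : κ → MvPolynomial ι k) :
    fixedZeroCard f (p ^ s) ≤ (p ^ s) ^ Fintype.card ι := by
  have : Finite (frobeniusFixed p k s) := Nat.finite_of_card_ne_zero <| by
    rw [natCard_frobeniusFixed hs]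
    exact pow_ne_zero _ (Fact.out : p.Prime).ne_zero
  calc fixedZeroCard f (p ^ s) ≤ Nat.card (ι → frobeniusFixed p k s) :=
        Nat.card_le_card_of_injective (fun x i => ⟨x.1 i, x.2.2 i⟩) fun x y hxy =>
          Subtype.ext <| funext fun i => congrArg Subtype.val (congrFun hxy i)
    _ = (p ^ s) ^ Fintype.card ι := by
        rw [Nat.card_fun, natCard_frobeniusFixed hs, Nat.card_eq_fintype_card]

end FixedSubfield

section PointCount

variable {p : ℕ} [Fact p.Prime] {k : Type*} [Field k] [CharP k p] [IsAlgClosed k] {e : ℕ}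
  {ι κ : Type*} {f : κ → MvPolynomial ι k}

theorem pow_dvd_pow_mul_fixedZeroCard_sub_coeff_dworkTraceSeries [Fintype ι] [DecidableEq ι]
    [Fintype κ] [DecidableEq κ] {R : Type*} [CommRing R] [IsDomain R] [Algebra (WittVector p k) R]
    [FaithfulSMul (WittVector p k) R] (he : e ≠ 0) {m : ℕ} (hm : m ≠ 0) {ζ : R}
    (hζ : IsPrimitiveRoot ζ p) (M : ℕ) (hf : ∀ j d, (f j).coeff d ^ p ^ e = (f j).coeff d) :
    (1 - ζ) ^ M ∣
      (((p ^ e) ^ m) ^ Fintype.card κ * fixedZeroCard f ((p ^ e) ^ m) : R) -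
      coeff m (dworkTraceSeries (p ^ e)
        (splittingPolynomial p M e (1 - ζ) (teichmullerLift p k R) (sumXMul f))) := by
  classical
  have hcard : Nat.card (frobeniusFixed p k (e * m)) = (p ^ e) ^ m := by
    rw [natCard_frobeniusFixed (mul_ne_zero he hm), pow_mul]
  have : Finite (frobeniusFixed p k (e * m)) := Nat.finite_of_card_ne_zero <| by
    rw [hcard]
    exact pow_ne_zero _ (pow_ne_zero _ (Fact.out : p.Prime).ne_zero)
  have := Fintype.ofFinite (frobeniusFixed p k (e * m))
  let : Algebra (ZMod p) (frobeniusFixed p k (e * m)) := ZMod.algebra _ p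
  have hpow (x : k) (hx : x ^ p ^ e = x) : x ^ p ^ (e * m) = x := by
    rw [← iterateFrobenius_def, iterateFrobenius_mul_apply]
    exact (Function.IsFixedPt.iterate hx m)
  choose g hg using fun j => exists_map_frobeniusFixed_eq fun d => hpow _ (hf j d)
  obtain rfl : (fun j => (g j).map (algebraMap _ k)) = f := funext hg
  have hgcoeff (j : κ) (d : ι →₀ ℕ) : (g j).coeff d ^ p ^ e = (g j).coeff d := by
    refine (algebraMap (frobeniusFixed p k (e * m)) k).injective ?_
    simpa only [MvPolynomial.coeff_map, map_pow] using hf j d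
  rw [Nat.card_eq_fintype_card] at hcard
  have h := pow_dvd_card_pow_mul_card_sub_coeff_dworkTraceSeries (k := k) he hm hcard hζ M hgcoeff
  rw [map_sumXMul, hcard, ← Fintype.card_subtype,
    ← Nat.card_eq_fintype_card (α := {x // ∀ j, MvPolynomial.eval x (g j) = 0}),
    ← fixedZeroCard_map_eq, pow_mul] at h
  exact_mod_cast h

theorem eventually_det_hankel_pow_mul_fixedZeroCard_eq_zero [Finite ι] [Fintype κ] (he : e ≠ 0)
    (hf : ∀ j d, (f j).coeff d ^ p ^ e = (f j).coeff d) :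
    ∃ n₀, ∀ n, n₀ ≤ n → (hankel (fun m => (((p ^ e) ^ Fintype.card κ) ^ m : ℤ) *
      if m = 0 then 0 else (fixedZeroCard f ((p ^ e) ^ m) : ℤ)) n).det = 0 := by
  classical
  cases nonempty_fintype ι
  have hp : p.Prime := Fact.out
  have := charZero_wittVector (p := p) (k := k)
  obtain ⟨R, _, _, _, _, _, ζ, hζ⟩ := exists_isIntegral_isPrimitiveRoot (WittVector p k) p
  have hreg : IsLeftRegular (1 - ζ) :=
    IsLeftCancelMulZero.mul_left_cancel_of_ne_zero (sub_ne_zero.mpr (hζ.ne_one hp.one_lt).symm)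
  let c := ∑ d ∈ (sumXMul f).support, p ^ e * d.degree + 1
  have hc : ∀ d ∈ (sumXMul f).support, p ^ e * d.degree ≤ c := fun d hd =>
    Nat.le_succ_of_le (single_le_sum (f := fun d => p ^ e * d.degree) (fun _ _ => zero_le) hd)
  refine eventually_det_hankel_eq_zero (l := 1 - ζ) (N := p)
    (B := (p ^ e) ^ Fintype.card κ * (p ^ e) ^ Fintype.card ι) hp.two_le
    (fun _ _ => pow_dvd_of_one_sub_pow_dvd_intCast (k := k) hζ.pow_eq_one) (fun m => ?_) fun C =>
    ⟨_, fun M => ⟨_, isOverconvergentQuotient_dworkTraceSeries hreg (c := c) (Nat.succ_pos _)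
      (splittingPolynomial_mem_weightSubalgebra (M := M) (τ := teichmullerLift p k R) hp.pos hc)
      (hp.two_le.trans (Nat.le_self_pow he p)) C, fun m => ?_⟩⟩
  · rcases eq_or_ne m 0 with rfl | hm
    · simp
    · have hle : fixedZeroCard f ((p ^ e) ^ m) ≤ ((p ^ e) ^ Fintype.card ι) ^ m := by
        rw [pow_right_comm (p ^ e), ← pow_mul p]
        exact fixedZeroCard_le (mul_ne_zero he hm) f
      rw [if_neg hm, abs_of_nonneg (by positivity)]
      exact_mod_cast (Nat.mul_le_mul_left _ hle).trans_eq (mul_pow _ _ m).symm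
  · rcases eq_or_ne m 0 with rfl | hm
    · simp [coeff_zero_dworkTraceSeries]
    · rw [if_neg hm, ← pow_right_comm]
      exact_mod_cast
        pow_dvd_pow_mul_fixedZeroCard_sub_coeff_dworkTraceSeries he hm hζ M hf

theorem eventually_det_hankel_fixedZeroCard_eq_zero [Finite ι] [Finite κ] (he : e ≠ 0)
    (hf : ∀ j d, (f j).coeff d ^ p ^ e = (f j).coeff d) :
    ∃ n₀, ∀ n, n₀ ≤ n → (hankel (fun m =>
      if m = 0 then 0 else (fixedZeroCard f ((p ^ e) ^ m) : ℤ)) n).det = 0 := by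
  cases nonempty_fintype κ
  obtain ⟨n₀, hn₀⟩ := eventually_det_hankel_pow_mul_fixedZeroCard_eq_zero he hf
  refine ⟨n₀, fun n hn => ?_⟩
  have hdet := hn₀ n hn
  rw [det_hankel_pow_mul] at hdet
  have hp : (p : ℤ) ≠ 0 := Nat.cast_ne_zero.mpr (Fact.out : p.Prime).ne_zero
  refine (mul_eq_zero.mp hdet).resolve_left (pow_ne_zero _ (prod_ne_zero_iff.mpr fun i _ => ?_))
  exact pow_ne_zero _ (pow_ne_zero _ (pow_ne_zero _ hp))

end PointCount

end DworkRationality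

open DworkRationality in
theorem affine_poincare_series_rational_general {p e : ℕ} [Fact p.Prime] (he : e ≠ 0)
    {k ι κ : Type*} [Field k] [CharP k p] [IsAlgClosed k] [Finite ι] [Finite κ]
    {f : κ → MvPolynomial ι k} (hf : ∀ j d, (f j).coeff d ^ p ^ e = (f j).coeff d) :
    ∃ a b : Polynomial ℚ, b ≠ 0 ∧
      (b : PowerSeries ℚ) * PowerSeries.mk (fun m => if m = 0 then 0 else
        (Nat.card {x : ι → k // (∀ j, MvPolynomial.eval x (f j) = 0) ∧
          ∀ i, x i ^ (p ^ e) ^ m = x i} : ℚ)) = (a : PowerSeries ℚ) := by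
  obtain ⟨n₀, hn₀⟩ := eventually_det_hankel_fixedZeroCard_eq_zero he hf
  have hdet : ∀ n, n₀ ≤ n → (hankel (fun m =>
      if m = 0 then 0 else (fixedZeroCard f ((p ^ e) ^ m) : ℚ)) n).det = 0 := by
    intro n hn
    simpa [hn₀ n hn, apply_ite] using (map_det_hankel (Int.castRingHom ℚ) (fun m =>
      if m = 0 then 0 else (fixedZeroCard f ((p ^ e) ^ m) : ℤ)) n).symm
  obtain ⟨r, c, hcr, hc⟩ := exists_recurrence_of_eventually_det_hankel_eq_zero hdet
  exact exists_polynomial_mul_mk_eq_of_recurrence (hcr ▸ one_ne_zero) hc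

/-- Rationality of the Poincaré series of an affine variety over a finite field (the
unquantified, Dwork, case): if the polynomials `f j` over `Ω = AlgebraicClosure (ZMod p)`
have all coefficients fixed by `c ↦ c^q` (`q = p^e`), then the series whose `m`-th
coefficient counts common zeros with all coordinates in the subfield with `q^m` elements
is rational. -/
theorem affine_poincare_series_rational (p : ℕ) [Fact p.Prime] (e : ℕ) (he : 1 ≤ e)
    (n r : ℕ) (f : Fin r → MvPolynomial (Fin n) (AlgebraicClosure (ZMod p)))
    (hf : ∀ j d, ((f j).coeff d) ^ (p ^ e) = (f j).coeff d) :
    ∃ a b : Polynomial ℚ, b ≠ 0 ∧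
      (b : PowerSeries ℚ) *
        PowerSeries.mk (fun m => if m = 0 then 0 else
          (Nat.card {x : Fin n → AlgebraicClosure (ZMod p) //
            (∀ j, MvPolynomial.eval x (f j) = 0) ∧
            ∀ i, (x i) ^ ((p ^ e) ^ m) = x i} : ℚ)) = (a : PowerSeries ℚ) :=
  affine_poincare_series_rational_general (Nat.one_le_iff_ne_zero.mp he) hf
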